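/- Let A(u) = (3/16)u⁻² on U = {(u,v,y,z) ∈ ℝ⁴ : u > 0} and consider the conformally flat plane wave metric 2H = A(u)(y² + z²). Then the quotient of the real vector space of Killing tensors of g by its subspace of reducible Killing tensors has dimension exactly 6. -/

import Mathlib

noncomputable section

/-- Points of (an open subset of) `ℝ⁴`, with coordinates `(u,v,y,z)` indexed by `0,1,2,3`. -/
abbrev Pt : Type := Fin 4 → ℝ

/-- Partial derivative of a function in the `i`-th coordinate direction. -/
def pd (i : Fin 4) (f : Pt → ℝ) (p : Pt) : ℝ :=
  fderiv ℝ f p (Pi.single i 1)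

/-- Kronecker delta `δ^i_a`. -/
def kd (i a : Fin 4) : ℝ := if i = a then 1 else 0

/-- Symmetrized product of Kronecker deltas, `δ_{(a}^i δ_{b)}^j`. -/
def sd (i j a b : Fin 4) : ℝ := (kd i a * kd j b + kd j a * kd i b) / 2

/-- Components of the pp-wave metric `g = -2 du dv - 2H du² + dy² + dz²`. -/
def ppMetric (H : Pt → ℝ) (p : Pt) (a b : Fin 4) : ℝ :=
  if a = 0 ∧ b = 0 then -2 * H p
  else if (a = 0 ∧ b = 1) ∨ (a = 1 ∧ b = 0) then -1
  else if (a = 2 ∧ b = 2) ∨ (a = 3 ∧ b = 3) then 1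
  else 0

/-- Christoffel symbols `Γ^d_{ab}` of the pp-wave metric:
`Γ^v_{uu} = H_{,u}`, `Γ^y_{uu} = Γ^v_{uy} = Γ^v_{yu} = H_{,y}`,
`Γ^z_{uu} = Γ^v_{uz} = Γ^v_{zu} = H_{,z}`, all others zero. -/
def Gamma (H : Pt → ℝ) (p : Pt) (d a b : Fin 4) : ℝ :=
  if d = 1 ∧ a = 0 ∧ b = 0 then pd 0 H p
  else if (d = 2 ∧ a = 0 ∧ b = 0) ∨ (d = 1 ∧ ((a = 0 ∧ b = 2) ∨ (a = 2 ∧ b = 0))) then pd 2 H p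
  else if (d = 3 ∧ a = 0 ∧ b = 0) ∨ (d = 1 ∧ ((a = 0 ∧ b = 3) ∨ (a = 3 ∧ b = 0))) then pd 3 H p
  else 0

/-- Covariant derivative of a covector field: `∇_a X_b = ∂_a X_b - Γ^d_{ab} X_d`. -/
def covD1 (H : Pt → ℝ) (X : Pt → Fin 4 → ℝ) (p : Pt) (a b : Fin 4) : ℝ :=
  pd a (fun q => X q b) p - ∑ d, Gamma H p d a b * X p d

/-- Covariant derivative of a 2-tensor field:
`∇_c T_{ab} = ∂_c T_{ab} - Γ^d_{ca} T_{db} - Γ^d_{cb} T_{ad}`. -/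
def covD2 (H : Pt → ℝ) (T : Pt → Fin 4 → Fin 4 → ℝ) (p : Pt) (c a b : Fin 4) : ℝ :=
  pd c (fun q => T q a b) p - ∑ d, Gamma H p d c a * T p d b
    - ∑ d, Gamma H p d c b * T p a d

/-- A Killing vector of the pp-wave metric on `U`, given by its covariant components:
a smooth covector field with `∇_{(a}X_{b)} = 0` on `U`. -/
def IsKillingVector (H : Pt → ℝ) (U : Set Pt) (X : Pt → Fin 4 → ℝ) : Prop :=
  (∀ a, ContDiffOn ℝ (⊤ : ℕ∞) (fun p => X p a) U) ∧
  ∀ p ∈ U, ∀ a b, covD1 H X p a b + covD1 H X p b a = 0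

/-- A (second order) Killing tensor of the pp-wave metric on `U`: a smooth symmetric
2-tensor field with `∇_{(c}K_{ab)} = 0` on `U`. -/
def IsKillingTensor (H : Pt → ℝ) (U : Set Pt) (K : Pt → Fin 4 → Fin 4 → ℝ) : Prop :=
  (∀ a b, ContDiffOn ℝ (⊤ : ℕ∞) (fun p => K p a b) U) ∧
  (∀ p a b, K p a b = K p b a) ∧
  ∀ p ∈ U, ∀ a b c,
    covD2 H K p c a b + covD2 H K p a b c + covD2 H K p b c a = 0

/-- A Killing tensor is reducible if (on `U`) it is a constant-coefficient linear combination
of the metric `g_{ab}` and finitely many symmetrized products `X_{(a}Y_{b)}` of Killing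
vectors `X`, `Y`. -/
def IsReducible (H : Pt → ℝ) (U : Set Pt) (K : Pt → Fin 4 → Fin 4 → ℝ) : Prop :=
  ∃ (c₀ : ℝ) (n : ℕ) (c : Fin n → ℝ) (X Y : Fin n → Pt → Fin 4 → ℝ),
    (∀ i, IsKillingVector H U (X i)) ∧ (∀ i, IsKillingVector H U (Y i)) ∧
    ∀ p ∈ U, ∀ a b, K p a b =
      c₀ * ppMetric H p a b + ∑ i, c i * ((X i p a * Y i p b + X i p b * Y i p a) / 2)

/-!
In the coordinates `x⁰ = √u`, `x¹ = 2 v - (y² + z²) / (4 u)`, `x² = u^(-1/4) y`, `x³ = u^(-1/4) z`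
the metric is `x⁰ η`, where `η = -2 dx⁰ dx¹ + (dx²)² + (dx³)²` is the Minkowski metric. In the frame
`(1 / x⁰) ∂ₐ` the Killing equations with an index `0` integrate explicitly in `x⁰`; comparing
coefficients of the powers of `x⁰` in the remaining ones leaves equations in `x¹, x², x³` with only
polynomial solutions. The function `4 x⁰ k₀₁ + (x⁰)² ∂₁ k₀₀` of a Killing tensor `k` then ranges
over the span of `1, x¹, x², x³, (x²)², x² x³, (x³)²`. It vanishes exactly when `k` is a combination
of products of Killing covectors and is a nonzero constant on the metric, so the six nonconstant
functions count the irreducible Killing tensors.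
-/

section FrameChange

open scoped Matrix

variable {𝕜 R ι : Type*} [CommRing 𝕜] [CommRing R] [Algebra 𝕜 R] [Fintype ι]

lemma dotProduct_dotProduct_comm (u v : ι → R) (k : ι → ι → R) :
    (u ⬝ᵥ fun i => v ⬝ᵥ k i) = v ⬝ᵥ fun j => u ⬝ᵥ fun i => k i j := by
  simp only [dotProduct, Finset.mul_sum]
  rw [Finset.sum_comm]
  simp only [mul_left_comm]

lemma dotProduct_dotProduct_comm_of_symm {k : ι → ι → R} (hk : ∀ i j, k i j = k j i) (u v : ι → R) :
    (u ⬝ᵥ fun i => v ⬝ᵥ k i) = v ⬝ᵥ fun i => u ⬝ᵥ k i :=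
  (dotProduct_dotProduct_comm u v k).trans
    (congrArg _ (funext fun j => congrArg _ (funext fun i => hk i j)))

lemma derivation_dotProduct (D : Derivation 𝕜 R R) (X Y : ι → R) :
    D (X ⬝ᵥ Y) = (fun i => D (X i)) ⬝ᵥ Y + X ⬝ᵥ fun i => D (Y i) := by
  simp only [dotProduct, map_sum, Derivation.leibniz, smul_eq_mul, ← Finset.sum_add_distrib]
  exact Finset.sum_congr rfl fun i _ => by ring

/-- The symmetric product `α ⊗ β + β ⊗ α` of two covectors. -/
def symmProd (α β : ι → R) (a b : ι) : R := α a * β b + α b * β a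

lemma dotProduct_symmProd (c α β : ι → R) (a : ι) :
    c ⬝ᵥ symmProd α β a = α a * (c ⬝ᵥ β) + β a * (c ⬝ᵥ α) := by
  have hrow : symmProd α β a = α a • β + β a • α := funext fun b => by
    simp only [symmProd, Pi.add_apply, Pi.smul_apply, smul_eq_mul, mul_comm]
  simp only [hrow, dotProduct_add, dotProduct_smul, smul_eq_mul]

/-- The part of a torsion-free connection seen by the Killing equations, in a frame `e`:
`deriv a` is the derivative along `e a` and `coeff a b c` is the component along `e c` of
`∇ (e a) (e b) + ∇ (e b) (e a)`. -/
structure FrameConnection (𝕜 R ι : Type*) [CommRing 𝕜] [CommRing R] [Algebra 𝕜 R] where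
  deriv : ι → Derivation 𝕜 R R
  coeff : ι → ι → ι → R

namespace FrameConnection

/-- The Killing equation for covectors, in components. -/
def IsKillingForm (A : FrameConnection 𝕜 R ι) (α : ι → R) : Prop :=
  ∀ a b, A.deriv a (α b) + A.deriv b (α a) = A.coeff a b ⬝ᵥ α

/-- The Killing equation for symmetric two-tensors, in components. -/
structure IsKillingTwoTensor (A : FrameConnection 𝕜 R ι) (k : ι → ι → R) : Prop where
  symm : ∀ a b, k a b = k b a
  cyclic : ∀ a b c, A.deriv c (k a b) + A.deriv a (k b c) + A.deriv b (k c a) =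
    A.coeff a b ⬝ᵥ k c + A.coeff b c ⬝ᵥ k a + A.coeff c a ⬝ᵥ k b

lemma IsKillingForm.smul {A : FrameConnection 𝕜 R ι} {α : ι → R} (hα : A.IsKillingForm α) (r : 𝕜) :
    A.IsKillingForm (r • α) := fun a b => by
  simp only [Pi.smul_apply, Derivation.map_smul, dotProduct_smul, ← smul_add, hα a b]

/-- The space of Killing tensors. -/
def killingTensors (A : FrameConnection 𝕜 R ι) : Submodule 𝕜 (ι → ι → R) where
  carrier := {k | A.IsKillingTwoTensor k}
  add_mem' {k l} hk hl := ⟨fun a b => congrArg₂ (· + ·) (hk.symm a b) (hl.symm a b), fun a b c => by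
    simp only [Pi.add_apply, map_add, dotProduct_add]
    linear_combination hk.cyclic a b c + hl.cyclic a b c⟩
  zero_mem' := ⟨fun _ _ => rfl, fun _ _ _ => by
    simp only [Pi.zero_apply, map_zero, dotProduct_zero]⟩
  smul_mem' r k hk := ⟨fun a b => congrArg (r • ·) (hk.symm a b), fun a b c => by
    simp only [Pi.smul_apply, Derivation.map_smul, dotProduct_smul, ← smul_add, hk.cyclic]⟩

lemma IsKillingForm.symmProd {A : FrameConnection 𝕜 R ι} {α β : ι → R} (hα : A.IsKillingForm α)
    (hβ : A.IsKillingForm β) : A.IsKillingTwoTensor (symmProd α β) where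
  symm a b := by simp only [_root_.symmProd]; ring
  cyclic a b c := by
    simp only [dotProduct_symmProd, ← hα _ _, ← hβ _ _, _root_.symmProd, map_add,
      Derivation.leibniz, smul_eq_mul]
    ring

/-- The span of the symmetric products of two Killing covectors. -/
def killingProducts (A : FrameConnection 𝕜 R ι) : Submodule 𝕜 (ι → ι → R) :=
  Submodule.span 𝕜 {k | ∃ α β, A.IsKillingForm α ∧ A.IsKillingForm β ∧ k = symmProd α β}

lemma killingProducts_le (A : FrameConnection 𝕜 R ι) : A.killingProducts ≤ A.killingTensors :=
  Submodule.span_le.2 fun _ ⟨_, _, hα, hβ, hk⟩ => hk ▸ hα.symmProd hβ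

lemma symmProd_mem_killingProducts {A : FrameConnection 𝕜 R ι} {α β : ι → R}
    (hα : A.IsKillingForm α) (hβ : A.IsKillingForm β) : symmProd α β ∈ A.killingProducts :=
  Submodule.subset_span ⟨α, β, hα, hβ, rfl⟩

/-- The reducible Killing tensors: the span of the metric `g` and the products of Killing
covectors. -/
def reducibleTensors (A : FrameConnection 𝕜 R ι) (g : ι → ι → R) : Submodule 𝕜 (ι → ι → R) :=
  Submodule.span 𝕜 {g} ⊔ A.killingProducts

lemma mem_reducibleTensors_iff {A : FrameConnection 𝕜 R ι} {g k : ι → ι → R} :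
    k ∈ A.reducibleTensors g ↔ ∃ (c₀ : 𝕜) (n : ℕ) (c : Fin n → 𝕜) (α β : Fin n → ι → R),
      (∀ i, A.IsKillingForm (α i)) ∧ (∀ i, A.IsKillingForm (β i)) ∧
      k = c₀ • g + ∑ i, c i • symmProd (α i) (β i) := by
  constructor
  · intro hk
    obtain ⟨l, hl, p, hp, rfl⟩ := Submodule.mem_sup.1 hk
    obtain ⟨c₀, rfl⟩ := Submodule.mem_span_singleton.1 hl
    obtain ⟨n, c, P, rfl⟩ := Submodule.mem_span_set'.1 hp
    choose α β hα hβ hP using fun i => (P i).2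
    exact ⟨c₀, n, c, α, β, hα, hβ, by simp only [hP]⟩
  · rintro ⟨c₀, n, c, α, β, hα, hβ, rfl⟩
    exact add_mem
      (Submodule.mem_sup_left (Submodule.smul_mem _ c₀ (Submodule.mem_span_singleton_self g)))
      (Submodule.mem_sup_right (sum_mem fun i _ =>
        Submodule.smul_mem _ (c i) (symmProd_mem_killingProducts (hα i) (hβ i))))

/-- The tensors `b i` are Killing tensors whose classes form a basis of the quotient of the Killing
tensors by the reducible ones. -/
structure IsBasisModReducible {κ : Type*} [Fintype κ] (A : FrameConnection 𝕜 R ι)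
    (g : ι → ι → R) (b : κ → ι → ι → R) : Prop where
  isKillingTwoTensor : ∀ i, A.IsKillingTwoTensor (b i)
  eq_zero_of_sum_smul_mem : ∀ c : κ → 𝕜, ∑ i, c i • b i ∈ A.reducibleTensors g → c = 0
  exists_sub_sum_smul_mem : ∀ k, A.IsKillingTwoTensor k →
    ∃ c : κ → 𝕜, k - ∑ i, c i • b i ∈ A.reducibleTensors g

/-- `A` and `B` are components of one connection, the frame of `B` having components `e` with
respect to that of `A`. -/
structure IsFrameChange (A B : FrameConnection 𝕜 R ι) (e : Matrix ι ι R) : Prop where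
  deriv : ∀ a f, B.deriv a f = ∑ i, e a i * A.deriv i f
  coeff : ∀ a b j, B.deriv a (e b j) + B.deriv b (e a j) +
    ∑ i, ∑ l, e a i * e b l * A.coeff i l j = ∑ c, B.coeff a b c * e c j

/-- Components of a two-tensor in the frame with components `e`. -/
def changeFrame (𝕜 : Type*) [CommRing 𝕜] [Algebra 𝕜 R] (e : Matrix ι ι R) :
    (ι → ι → R) →ₗ[𝕜] (ι → ι → R) where
  toFun k a b := e a ⬝ᵥ fun i => e b ⬝ᵥ k i
  map_add' k l := by
    funext a b
    simp only [Pi.add_apply, dotProduct_add, ← Pi.add_def]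
  map_smul' r k := by
    funext a b
    simp only [Pi.smul_apply, dotProduct_smul, ← Pi.smul_def, RingHom.id_apply]

lemma changeFrame_apply (e : Matrix ι ι R) (k : ι → ι → R) (a b : ι) :
    changeFrame 𝕜 e k a b = e a ⬝ᵥ fun i => e b ⬝ᵥ k i := rfl

lemma changeFrame_eq_mul (e : Matrix ι ι R) (k : ι → ι → R) :
    changeFrame 𝕜 e k = e * Matrix.of k * eᵀ := by
  rw [Matrix.mul_assoc]
  funext a b
  simp only [changeFrame_apply, Matrix.mul_apply, dotProduct, Matrix.transpose_apply,
    Matrix.of_apply, mul_comm (e b _)]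

lemma changeFrame_flip (e : Matrix ι ι R) (k : ι → ι → R) (a b : ι) :
    changeFrame 𝕜 e k b a = changeFrame 𝕜 e (fun i j => k j i) a b :=
  dotProduct_dotProduct_comm _ _ k

lemma changeFrame_symmProd (e : Matrix ι ι R) (α β : ι → R) :
    changeFrame 𝕜 e (symmProd α β) = symmProd (e *ᵥ α) (e *ᵥ β) := by
  funext a b
  have hrow : (fun i => e b ⬝ᵥ symmProd α β i) = (e b ⬝ᵥ β) • α + (e b ⬝ᵥ α) • β := by
    funext i
    simp only [dotProduct_symmProd, Pi.add_apply, Pi.smul_apply, smul_eq_mul, mul_comm]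
  rw [changeFrame_apply, hrow, dotProduct_add, dotProduct_smul, dotProduct_smul]
  simp only [symmProd, Matrix.mulVec, smul_eq_mul]
  ring

lemma changeFrame_mul (e f : Matrix ι ι R) (k : ι → ι → R) :
    changeFrame 𝕜 (e * f) k = changeFrame 𝕜 e (changeFrame 𝕜 f k) := by
  rw [changeFrame_eq_mul, changeFrame_eq_mul e, changeFrame_eq_mul f, Matrix.transpose_mul,
    Matrix.mul_assoc, Matrix.mul_assoc, ← Matrix.mul_assoc f, ← Matrix.mul_assoc _ fᵀ,
    ← Matrix.mul_assoc]
  rfl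

lemma changeFrame_one [DecidableEq ι] (k : ι → ι → R) :
    changeFrame 𝕜 (1 : Matrix ι ι R) k = k := by
  simp only [changeFrame_eq_mul, Matrix.transpose_one, Matrix.one_mul, Matrix.mul_one]
  rfl

lemma changeFrame_bijective [DecidableEq ι] {e : Matrix ι ι R} (he : IsUnit e) :
    Function.Bijective (changeFrame 𝕜 e) := by
  obtain ⟨e, rfl⟩ := he
  refine Function.bijective_iff_has_inverse.2 ⟨changeFrame 𝕜 (e⁻¹ : (Matrix ι ι R)ˣ).val,
    fun k => ?_, fun k => ?_⟩
  · rw [← changeFrame_mul, e.inv_mul, changeFrame_one]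
  · rw [← changeFrame_mul, e.mul_inv, changeFrame_one]

lemma changeFrame_symm {k : ι → ι → R} (hk : ∀ i j, k i j = k j i) (e : Matrix ι ι R) (a b : ι) :
    changeFrame 𝕜 e k a b = changeFrame 𝕜 e k b a :=
  dotProduct_dotProduct_comm_of_symm hk _ _

/-- Components of a three-tensor in the frame with components `e`. -/
def changeFrame₃ (e : Matrix ι ι R) (F : ι → ι → ι → R) (a b c : ι) : R :=
  e a ⬝ᵥ fun i => e b ⬝ᵥ fun j => e c ⬝ᵥ F i j

lemma changeFrame₃_rotate (e : Matrix ι ι R) (F : ι → ι → ι → R) (a b c : ι) :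
    changeFrame₃ e F b c a = changeFrame₃ e (fun i j l => F j l i) a b c := by
  simp only [changeFrame₃, dotProduct_dotProduct_comm (e a)]

lemma changeFrame₃_add (e : Matrix ι ι R) (F G : ι → ι → ι → R) :
    changeFrame₃ e (F + G) = changeFrame₃ e F + changeFrame₃ e G := by
  funext a b c
  simp only [changeFrame₃, Pi.add_apply, dotProduct_add, ← Pi.add_def]

lemma changeFrame₃_sub (e : Matrix ι ι R) (F G : ι → ι → ι → R) :
    changeFrame₃ e (F - G) = changeFrame₃ e F - changeFrame₃ e G := by
  funext a b c
  simp only [changeFrame₃, Pi.sub_apply, dotProduct_sub, ← Pi.sub_def]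

variable {e : Matrix ι ι R}

lemma eq_zero_of_dotProduct_eq_zero (he : Function.Injective e.mulVec) {v : ι → R}
    (hv : ∀ a, e a ⬝ᵥ v = 0) : v = 0 :=
  he ((funext hv).trans e.mulVec_zero.symm)

lemma eq_zero_of_changeFrame_eq_zero (he : Function.Injective e.mulVec) {k : ι → ι → R}
    (h : changeFrame 𝕜 e k = 0) : k = 0 :=
  funext fun i => eq_zero_of_dotProduct_eq_zero he fun b =>
    congrFun (eq_zero_of_dotProduct_eq_zero he fun a => congrFun₂ h a b) i

lemma eq_zero_of_changeFrame₃_eq_zero (he : Function.Injective e.mulVec) {F : ι → ι → ι → R}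
    (h : changeFrame₃ e F = 0) : F = 0 :=
  funext₂ fun i j => eq_zero_of_dotProduct_eq_zero he fun c =>
    congrFun (eq_zero_of_dotProduct_eq_zero he fun b =>
      congrFun (eq_zero_of_dotProduct_eq_zero he fun a => congrFun₃ h a b c) i) j

namespace IsFrameChange

variable {A B : FrameConnection 𝕜 R ι} (h : A.IsFrameChange B e)
include h

lemma deriv_dotProduct (a : ι) (X α : ι → R) :
    B.deriv a (X ⬝ᵥ α) = (fun i => B.deriv a (X i)) ⬝ᵥ α +
      X ⬝ᵥ fun j => e a ⬝ᵥ fun i => A.deriv i (α j) := by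
  rw [derivation_dotProduct]
  exact congrArg _ (congrArg _ (funext fun j => h.deriv a (α j)))

lemma coeff_dotProduct (a b : ι) (α : ι → R) :
    B.coeff a b ⬝ᵥ (e *ᵥ α) = (fun i => B.deriv a (e b i)) ⬝ᵥ α +
      (fun i => B.deriv b (e a i)) ⬝ᵥ α +
      changeFrame 𝕜 e (fun i j => A.coeff i j ⬝ᵥ α) a b := by
  have hcoeff : B.coeff a b ᵥ* e = (fun i => B.deriv a (e b i)) + (fun i => B.deriv b (e a i)) +
      ∑ i, e a i • ∑ j, e b j • A.coeff i j := by
    funext l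
    refine (h.coeff a b l).symm.trans ?_
    simp only [Pi.add_apply, Finset.sum_apply, Pi.smul_apply, smul_eq_mul, Finset.mul_sum,
      mul_assoc]
  rw [Matrix.dotProduct_mulVec, hcoeff, add_dotProduct, add_dotProduct]
  simp only [sum_dotProduct, smul_dotProduct, smul_eq_mul, changeFrame_apply]
  rfl

lemma isKillingForm_iff (he : Function.Injective e.mulVec) {α : ι → R} :
    B.IsKillingForm (e *ᵥ α) ↔ A.IsKillingForm α := by
  have hderiv : ∀ a b, B.deriv a ((e *ᵥ α) b) = (fun i => B.deriv a (e b i)) ⬝ᵥ α +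
      changeFrame 𝕜 e (fun i j => A.deriv j (α i)) b a := fun a b => h.deriv_dotProduct a (e b) α
  have hres : (fun a b => B.deriv a ((e *ᵥ α) b) + B.deriv b ((e *ᵥ α) a)
      - B.coeff a b ⬝ᵥ (e *ᵥ α)) =
      changeFrame 𝕜 e fun i j => A.deriv i (α j) + A.deriv j (α i) - A.coeff i j ⬝ᵥ α := by
    funext a b
    have hsub : (fun i j => A.deriv i (α j) + A.deriv j (α i) - A.coeff i j ⬝ᵥ α) =
        (fun i j => A.deriv i (α j)) + (fun i j => A.deriv j (α i)) -
          fun i j => A.coeff i j ⬝ᵥ α := rfl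
    rw [h.coeff_dotProduct, hderiv, hderiv, changeFrame_flip, hsub, map_sub, map_add]
    simp only [Pi.add_apply, Pi.sub_apply]
    ring
  refine ⟨fun hα a b => sub_eq_zero.1 ?_, fun hα a b => sub_eq_zero.1 ?_⟩
  · exact congrFun₂ (eq_zero_of_changeFrame_eq_zero he
      (hres.symm.trans (funext₂ fun a b => sub_eq_zero.2 (hα a b)))) a b
  · refine (congrFun₂ hres a b).trans ?_
    simp only [fun a b => sub_eq_zero.2 (hα a b)]
    exact congrFun₂ (map_zero (changeFrame 𝕜 e)) a b

section KillingTwoTensor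

variable {k : ι → ι → R} (hk : ∀ i j, k i j = k j i)
include hk

lemma deriv_changeFrame (a b c : ι) : B.deriv c (changeFrame 𝕜 e k a b) =
    (fun i => B.deriv c (e a i)) ⬝ᵥ (fun i => e b ⬝ᵥ k i) +
      (fun i => B.deriv c (e b i)) ⬝ᵥ (fun i => e a ⬝ᵥ k i) +
      changeFrame₃ e (fun i j l => A.deriv l (k i j)) a b c := by
  have hswap : (e a ⬝ᵥ fun i => (fun j => B.deriv c (e b j)) ⬝ᵥ k i) =
      (fun j => B.deriv c (e b j)) ⬝ᵥ fun i => e a ⬝ᵥ k i :=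
    dotProduct_dotProduct_comm_of_symm hk _ _
  rw [changeFrame_apply, derivation_dotProduct]
  simp only [h.deriv_dotProduct, ← Pi.add_def, dotProduct_add]
  rw [hswap, add_assoc]
  rfl

lemma coeff_dotProduct_changeFrame (a b c : ι) : B.coeff a b ⬝ᵥ changeFrame 𝕜 e k c =
    (fun i => B.deriv a (e b i)) ⬝ᵥ (fun i => e c ⬝ᵥ k i) +
      (fun i => B.deriv b (e a i)) ⬝ᵥ (fun i => e c ⬝ᵥ k i) +
      changeFrame₃ e (fun i j l => A.coeff i j ⬝ᵥ k l) a b c := by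
  have hrow : changeFrame 𝕜 e k c = e *ᵥ fun i => e c ⬝ᵥ k i :=
    funext fun d => changeFrame_symm hk e c d
  have hcoeff : ∀ i j, A.coeff i j ⬝ᵥ (fun l => e c ⬝ᵥ k l) =
      e c ⬝ᵥ fun l => A.coeff i j ⬝ᵥ k l := fun i j =>
    dotProduct_dotProduct_comm_of_symm hk _ _
  rw [hrow, h.coeff_dotProduct]
  simp only [hcoeff]
  rfl

lemma isKillingTwoTensor_iff (he : Function.Injective e.mulVec) :
    B.IsKillingTwoTensor (changeFrame 𝕜 e k) ↔ A.IsKillingTwoTensor k := by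
  have hres : (fun a b c => B.deriv c (changeFrame 𝕜 e k a b) + B.deriv a (changeFrame 𝕜 e k b c)
      + B.deriv b (changeFrame 𝕜 e k c a) - (B.coeff a b ⬝ᵥ changeFrame 𝕜 e k c
      + B.coeff b c ⬝ᵥ changeFrame 𝕜 e k a + B.coeff c a ⬝ᵥ changeFrame 𝕜 e k b)) =
      changeFrame₃ e fun a b c => A.deriv c (k a b) + A.deriv a (k b c) + A.deriv b (k c a) -
        (A.coeff a b ⬝ᵥ k c + A.coeff b c ⬝ᵥ k a + A.coeff c a ⬝ᵥ k b) := by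
    funext a b c
    have hsub : (fun a b c => A.deriv c (k a b) + A.deriv a (k b c) + A.deriv b (k c a) -
        (A.coeff a b ⬝ᵥ k c + A.coeff b c ⬝ᵥ k a + A.coeff c a ⬝ᵥ k b)) =
        (fun a b c => A.deriv c (k a b)) + (fun a b c => A.deriv a (k b c)) +
          (fun a b c => A.deriv b (k c a)) - ((fun a b c => A.coeff a b ⬝ᵥ k c) +
          (fun a b c => A.coeff b c ⬝ᵥ k a) + fun a b c => A.coeff c a ⬝ᵥ k b) := rfl
    simp only [hsub, changeFrame₃_sub, changeFrame₃_add, Pi.add_apply, Pi.sub_apply,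
      h.deriv_changeFrame hk, h.coeff_dotProduct_changeFrame hk]
    have hrot (F : ι → ι → ι → R) :
        changeFrame₃ e F c a b = changeFrame₃ e (fun i j l => F l i j) a b c :=
      (changeFrame₃_rotate e F b c a).trans (changeFrame₃_rotate e _ a b c)
    simp only [changeFrame₃_rotate e _ a b c, hrot]
    ring
  refine ⟨fun H => ⟨hk, fun a b c => sub_eq_zero.1 ?_⟩, fun H => ⟨changeFrame_symm hk e,
    fun a b c => sub_eq_zero.1 ?_⟩⟩
  · exact congrFun₃ (eq_zero_of_changeFrame₃_eq_zero he
      (hres.symm.trans (funext₃ fun a b c => sub_eq_zero.2 (H.cyclic a b c)))) a b c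
  · refine (congrFun₃ hres a b c).trans ?_
    simp only [fun a b c => sub_eq_zero.2 (H.cyclic a b c)]
    simp only [changeFrame₃, ← Pi.zero_def, dotProduct_zero]

end KillingTwoTensor

lemma map_reducibleTensors (he : Function.Bijective e.mulVec) (g : ι → ι → R) :
    (A.reducibleTensors g).map (changeFrame 𝕜 e) = B.reducibleTensors (changeFrame 𝕜 e g) := by
  rw [reducibleTensors, reducibleTensors, killingProducts, killingProducts, Submodule.map_sup,
    Submodule.map_span, Submodule.map_span, Set.image_singleton]
  congr 2
  refine Set.Subset.antisymm ?_ ?_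
  · rintro _ ⟨_, ⟨α, β, hα, hβ, rfl⟩, rfl⟩
    exact ⟨_, _, (h.isKillingForm_iff he.1).2 hα, (h.isKillingForm_iff he.1).2 hβ,
      changeFrame_symmProd e α β⟩
  · rintro _ ⟨α', β', hα, hβ, rfl⟩
    obtain ⟨α, rfl⟩ := he.2 α'
    obtain ⟨β, rfl⟩ := he.2 β'
    exact ⟨_, ⟨α, β, (h.isKillingForm_iff he.1).1 hα, (h.isKillingForm_iff he.1).1 hβ, rfl⟩,
      changeFrame_symmProd e α β⟩

lemma isBasisModReducible [DecidableEq ι] (he : IsUnit e) {κ : Type*} [Fintype κ] {g : ι → ι → R}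
    {b : κ → ι → ι → R} (hb : B.IsBasisModReducible (changeFrame 𝕜 e g)
      fun i => changeFrame 𝕜 e (b i)) : A.IsBasisModReducible g b := by
  have hvec : Function.Bijective e.mulVec :=
    ⟨Matrix.mulVec_injective_of_isUnit he, Matrix.mulVec_surjective_iff_isUnit.2 he⟩
  have hframe : Function.Injective (changeFrame 𝕜 e) := (changeFrame_bijective he).1
  have hred (k : ι → ι → R) :
      changeFrame 𝕜 e k ∈ B.reducibleTensors (changeFrame 𝕜 e g) ↔ k ∈ A.reducibleTensors g := by
    rw [← h.map_reducibleTensors hvec, ← SetLike.mem_coe, Submodule.map_coe,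
      hframe.mem_set_image, SetLike.mem_coe]
  have hsymm (i : κ) : ∀ j l, b i j l = b i l j := congrFun₂ <| hframe <| funext₂ fun j l => by
    rw [(hb.isKillingTwoTensor i).symm, changeFrame_flip]
  refine ⟨fun i => (h.isKillingTwoTensor_iff (hsymm i) hvec.1).1 (hb.isKillingTwoTensor i),
    fun c hc => hb.eq_zero_of_sum_smul_mem c ?_, fun k hk => ?_⟩
  · simpa only [map_sum, map_smul] using (hred _).2 hc
  · obtain ⟨c, hc⟩ := hb.exists_sub_sum_smul_mem _
      ((h.isKillingTwoTensor_iff hk.symm hvec.1).2 hk)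
    exact ⟨c, (hred _).1 (by simpa only [map_sub, map_sum, map_smul] using hc)⟩

end IsFrameChange

end FrameConnection
end FrameChange

section Conformal

variable {𝕜 R : Type*} [Field 𝕜] [CommRing R] [Algebra 𝕜 R]

lemma derivation_ofNat (D : Derivation 𝕜 R R) (n : ℕ) [n.AtLeastTwo] :
    D ofNat(n) = 0 :=
  D.map_natCast n

lemma eq_zero_of_natCast_mul_eq_zero (𝕜 : Type*) {R : Type*} [Field 𝕜] [CharZero 𝕜] [CommRing R]
    [Algebra 𝕜 R] {n : ℕ} (hn : n ≠ 0) {f : R} (h : (n : R) * f = 0) : f = 0 := by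
  rw [← map_natCast (algebraMap 𝕜 R), ← Algebra.smul_def] at h
  exact (smul_eq_zero.1 h).resolve_left (Nat.cast_ne_zero.2 hn)

lemma eq_zero_of_ofNat_mul_eq_zero (𝕜 : Type*) {R : Type*} [Field 𝕜] [CharZero 𝕜] [CommRing R]
    [Algebra 𝕜 R] (n : ℕ) [n.AtLeastTwo] {f : R} (h : (ofNat(n) : R) * f = 0) : f = 0 :=
  eq_zero_of_natCast_mul_eq_zero 𝕜 (n := n) (NeZero.ne n) h

lemma inv_ofNat_smul_ofNat_mul [CharZero 𝕜] (n : ℕ) [n.AtLeastTwo] (f : R) :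
    (ofNat(n) : 𝕜)⁻¹ • (ofNat(n) * f) = f := by
  rw [← map_ofNat (algebraMap 𝕜 R), ← Algebra.smul_def, inv_smul_smul₀ (OfNat.ofNat_ne_zero n)]

/-- A derivation `D` with `D t = 1` treats polynomials in `t` over its constants formally. -/
lemma coeff_eq_zero_of_sum_mul_pow_eq_zero [CharZero 𝕜] {D : Derivation 𝕜 R R} {t : R}
    (ht : D t = 1) {n : ℕ} {f : Fin n → R} (hf : ∀ i, D (f i) = 0)
    (h : ∑ i, f i * t ^ (i : ℕ) = 0) : f = 0 := by
  induction n with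
  | zero => exact Subsingleton.elim _ _
  | succ n ih =>
    have hderiv : ∑ i : Fin n, ((i + 1 : ℕ) : R) * f i.succ * t ^ (i : ℕ) = 0 := by
      rw [← map_zero D, ← h, map_sum, Fin.sum_univ_succ]
      simp [Derivation.leibniz, Derivation.leibniz_pow, hf, ht, mul_comm, mul_left_comm]
    have hsucc : ∀ i : Fin n, f i.succ = 0 := fun i =>
      eq_zero_of_natCast_mul_eq_zero 𝕜 (i : ℕ).succ_ne_zero
        (congrFun (ih (fun i => by simp [Derivation.leibniz, hf]) hderiv) i)
    have hzero : f 0 = 0 := by simpa [Fin.sum_univ_succ, hsucc] using h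
    exact funext (Fin.cases hzero hsucc)

/-- Abstract version of the algebra of smooth functions on the half space `x 0 > 0` of a
four-dimensional affine space: commuting partial derivatives `d i`, coordinates `x i`, the
function `1 / x 0`, and no nonconstant function with vanishing derivatives. -/
structure HalfSpaceChart (𝕜 R : Type*) [Field 𝕜] [CommRing R] [Algebra 𝕜 R] where
  d : Fin 4 → Derivation 𝕜 R R
  x : Fin 4 → R
  xInv : R
  d_x : ∀ i j, d i (x j) = if i = j then 1 else 0
  d_comm : ∀ i j f, d i (d j f) = d j (d i f)
  x_mul_xInv : x 0 * xInv = 1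
  exists_algebraMap_eq : ∀ f, (∀ i, d i f = 0) → ∃ c : 𝕜, algebraMap 𝕜 R c = f

/-- The Minkowski metric `-2 dx⁰ dx¹ + (dx²)² + (dx³)²` in light-cone coordinates. -/
def lightConeMetric (R : Type*) [CommRing R] : Matrix (Fin 4) (Fin 4) R :=
  !![0, -1, 0, 0; -1, 0, 0, 0; 0, 0, 1, 0; 0, 0, 0, 1]

section lightConeMetric

local notation "η" => lightConeMetric R

@[simp] lemma lightConeMetric_zero_zero : η 0 0 = 0 := rfl
@[simp] lemma lightConeMetric_zero_one : η 0 1 = -1 := rfl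
@[simp] lemma lightConeMetric_one_zero : η 1 0 = -1 := rfl
@[simp] lemma lightConeMetric_one_one : η 1 1 = 0 := rfl
@[simp] lemma lightConeMetric_two_two : η 2 2 = 1 := rfl
@[simp] lemma lightConeMetric_three_three : η 3 3 = 1 := rfl

lemma lightConeMetric_symm (a b : Fin 4) : η a b = η b a := by
  fin_cases a <;> fin_cases b <;> rfl

lemma lightConeMetric_of_two_le {a i : Fin 4} (ha : a < 2) (hi : 2 ≤ i) : η a i = 0 := by
  revert ha hi
  fin_cases a <;> fin_cases i <;> simp [lightConeMetric]

lemma lightConeMetric_of_two_le' {a i : Fin 4} (ha : a < 2) (hi : 2 ≤ i) : η i a = 0 := by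
  rw [lightConeMetric_symm, lightConeMetric_of_two_le ha hi]

end lightConeMetric

lemma derivation_lightConeMetric (D : Derivation 𝕜 R R) (a b : Fin 4) :
    D (lightConeMetric R a b) = 0 := by
  fin_cases a <;> fin_cases b <;> simp [lightConeMetric]

namespace HalfSpaceChart

variable (C : HalfSpaceChart 𝕜 R)

local notation "η" => lightConeMetric R

lemma eq_zero_of_x_mul_eq_zero {f : R} (h : C.x 0 * f = 0) : f = 0 := by
  linear_combination C.xInv * h - f * C.x_mul_xInv

lemma d_zero_d_eq_zero {f : R} (hf : C.d 0 f = 0) (i : Fin 4) : C.d 0 (C.d i f) = 0 := by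
  rw [C.d_comm, hf, map_zero]

/-- The Levi-Civita connection of the conformally flat metric `x⁰ η`, in the frame
`(1 / x⁰) ∂ₐ`, where the components of the metric are `η / x⁰`. -/
def connection : FrameConnection 𝕜 R (Fin 4) where
  deriv a := C.xInv • C.d a
  coeff a b c := C.xInv ^ 2 * η a b * if c = 1 then 1 else 0

/-- The Killing covectors of the metric `x⁰ η`, in the frame `(1 / x⁰) ∂ₐ`. -/
abbrev IsKillingForm : (Fin 4 → R) → Prop := C.connection.IsKillingForm

/-- The Killing tensors of the metric `x⁰ η`, in the frame `(1 / x⁰) ∂ₐ`. -/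
abbrev IsKillingTwoTensor : (Fin 4 → Fin 4 → R) → Prop := C.connection.IsKillingTwoTensor

variable {C}

lemma connection_coeff_dotProduct (a b : Fin 4) (α : Fin 4 → R) :
    C.connection.coeff a b ⬝ᵥ α = C.xInv ^ 2 * (η a b * α 1) := by
  simp only [connection, dotProduct, mul_ite, mul_one, mul_zero, ite_mul, zero_mul,
    Finset.sum_ite_eq', Finset.mem_univ, if_true, mul_assoc]

lemma connection_deriv_apply (a : Fin 4) (f : R) : C.connection.deriv a f = C.xInv * C.d a f := rfl

lemma xInv_mul_eq_xInv_sq_mul_iff {f g : R} : C.xInv * f = C.xInv ^ 2 * g ↔ C.x 0 * f = g := by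
  have hx := C.x_mul_xInv
  exact ⟨fun h => by linear_combination C.x 0 ^ 2 * h - (C.x 0 * f - g * (C.x 0 * C.xInv + 1)) * hx,
    fun h => by linear_combination C.xInv ^ 2 * h - C.xInv * f * hx⟩

lemma isKillingForm_iff {α : Fin 4 → R} : C.IsKillingForm α ↔
    ∀ a b, C.x 0 * (C.d a (α b) + C.d b (α a)) = η a b * α 1 := by
  simp only [FrameConnection.IsKillingForm, connection_coeff_dotProduct, connection_deriv_apply,
    ← mul_add, xInv_mul_eq_xInv_sq_mul_iff]

lemma isKillingTwoTensor_iff {k : Fin 4 → Fin 4 → R} (hk : ∀ a b, k a b = k b a) :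
    C.IsKillingTwoTensor k ↔
      ∀ a b c, C.x 0 * (C.d c (k a b) + C.d a (k b c) + C.d b (k c a)) =
        η a b * k 1 c + η b c * k 1 a + η c a * k 1 b := by
  refine ⟨fun h a b c => ?_, fun h => ⟨hk, fun a b c => ?_⟩⟩
  · have := h.cyclic a b c
    simpa only [connection_coeff_dotProduct, connection_deriv_apply, ← mul_add,
      xInv_mul_eq_xInv_sq_mul_iff, hk _ 1] using this
  · simpa only [connection_coeff_dotProduct, connection_deriv_apply, ← mul_add,
      xInv_mul_eq_xInv_sq_mul_iff, hk _ 1] using h a b c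

lemma IsKillingForm.mul_add_eq {α : Fin 4 → R} (hα : C.IsKillingForm α) (a b : Fin 4) :
    C.x 0 * (C.d a (α b) + C.d b (α a)) = η a b * α 1 :=
  isKillingForm_iff.1 hα a b

lemma IsKillingTwoTensor.mul_add_add_eq {k : Fin 4 → Fin 4 → R} (hk : C.IsKillingTwoTensor k)
    (a b c : Fin 4) : C.x 0 * (C.d c (k a b) + C.d a (k b c) + C.d b (k c a)) =
      η a b * k 1 c + η b c * k 1 a + η c a * k 1 b :=
  (isKillingTwoTensor_iff hk.symm).1 hk a b c

variable (C)

/-- The profile which detects irreducible Killing tensors: it vanishes on products of Killing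
covectors and is constant on the metric. -/
def profile : (Fin 4 → Fin 4 → R) →ₗ[𝕜] R where
  toFun k := 4 * C.x 0 * k 0 1 + C.x 0 ^ 2 * C.d 1 (k 0 0)
  map_add' k l := by simp only [Pi.add_apply, map_add]; ring
  map_smul' r k := by
    simp only [Pi.smul_apply, Derivation.map_smul, RingHom.id_apply]
    simp only [Algebra.smul_def]
    ring

lemma profile_apply (k : Fin 4 → Fin 4 → R) :
    C.profile k = 4 * C.x 0 * k 0 1 + C.x 0 ^ 2 * C.d 1 (k 0 0) := rfl

variable {C}

section Killing

variable [CharZero 𝕜]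

lemma IsKillingForm.two_mul_apply_one {α : Fin 4 → R} (hα : C.IsKillingForm α) :
    2 * α 1 = - (C.x 0 * C.d 1 (α 0)) := by
  have h00 : C.d 0 (α 0) = 0 := by
    refine eq_zero_of_ofNat_mul_eq_zero 𝕜 2 (C.eq_zero_of_x_mul_eq_zero ?_)
    have h := hα.mul_add_eq 0 0
    simp only [lightConeMetric, Matrix.of_apply, Matrix.cons_val] at h
    linear_combination h
  have h01 : C.d 0 (2 * C.x 0 * α 1 + C.x 0 ^ 2 * C.d 1 (α 0)) = 0 := by
    have h := hα.mul_add_eq 0 1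
    simp only [lightConeMetric, Matrix.of_apply, Matrix.cons_val', Matrix.cons_val_one,
      Matrix.cons_val_zero, Matrix.cons_val_fin_one, neg_mul, one_mul] at h
    simp only [map_add, Derivation.leibniz, smul_eq_mul, C.d_x, ↓reduceIte, mul_one,
      derivation_ofNat, mul_zero, add_zero, C.d_zero_d_eq_zero h00, Derivation.leibniz_pow,
      Nat.add_one_sub_one, pow_one, nsmul_eq_mul, Nat.cast_ofNat, zero_add]
    linear_combination 2 * h
  have h02 : C.d 0 (α 2 + C.x 0 * C.d 2 (α 0)) = 0 := by
    refine C.eq_zero_of_x_mul_eq_zero ?_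
    have h := hα.mul_add_eq 0 2
    simp only [lightConeMetric, Matrix.of_apply, Matrix.cons_val', Matrix.cons_val,
      Matrix.cons_val_fin_one, Matrix.cons_val_zero, zero_mul] at h
    simp only [map_add, Derivation.leibniz, C.d_zero_d_eq_zero h00, smul_eq_mul, mul_zero, C.d_x,
      ↓reduceIte, mul_one, zero_add]
    linear_combination h
  have h22 := congrFun (coeff_eq_zero_of_sum_mul_pow_eq_zero (D := C.d 0) (t := C.x 0)
    (f := ![2 * C.x 0 * α 1 + C.x 0 ^ 2 * C.d 1 (α 0), 0,
      -4 * C.d 2 (α 2 + C.x 0 * C.d 2 (α 0)) - C.d 1 (α 0), 4 * C.d 2 (C.d 2 (α 0))])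
      (by simp [C.d_x]) ?_ ?_) 0
  · refine eq_neg_of_add_eq_zero_left (C.eq_zero_of_x_mul_eq_zero ?_)
    simp only [Matrix.cons_val, Pi.zero_apply] at h22
    linear_combination h22
  · intro i
    fin_cases i
    · exact h01
    · simp
    · simp [C.d_zero_d_eq_zero, h00, h02, derivation_ofNat, -map_add]
    · simp [C.d_zero_d_eq_zero, h00, derivation_ofNat]
  · have h := hα.mul_add_eq 2 2
    simp only [lightConeMetric, Matrix.of_apply, Matrix.cons_val', Matrix.cons_val,
      Matrix.cons_val_fin_one, Matrix.cons_val_one, Matrix.cons_val_zero, one_mul] at h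
    simp only [Nat.succ_eq_add_one, Nat.reduceAdd, map_add, Derivation.leibniz, smul_eq_mul, C.d_x,
      Fin.reduceEq, ↓reduceIte, mul_zero, add_zero, neg_mul, Fin.sum_univ_four,
      Matrix.cons_val_zero, Fin.coe_ofNat_eq_mod, Nat.zero_mod, pow_zero, mul_one,
      Matrix.cons_val_one, Nat.one_mod, pow_one, zero_mul, Matrix.cons_val, Nat.reduceMod,
      Nat.mod_succ]
    linear_combination -2 * C.x 0 * h

lemma profile_symmProd {α β : Fin 4 → R} (hα : C.IsKillingForm α) (hβ : C.IsKillingForm β) :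
    C.profile (symmProd α β) = 0 := by
  simp only [profile_apply, symmProd, map_add, Derivation.leibniz, smul_eq_mul]
  linear_combination 2 * C.x 0 * (α 0 * hβ.two_mul_apply_one + β 0 * hα.two_mul_apply_one)

lemma profile_eq_zero_of_mem_killingProducts {k : Fin 4 → Fin 4 → R}
    (hk : k ∈ C.connection.killingProducts) : C.profile k = 0 := by
  suffices C.connection.killingProducts ≤ LinearMap.ker C.profile from this hk
  exact Submodule.span_le.2 fun _ ⟨_, _, hα, hβ, hk⟩ => hk ▸ profile_symmProd hα hβ

variable (C) in
/-- First integral of the `(0, 0, i)` Killing equation: constant along `x⁰` for a Killing tensor `k`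
and `i ≥ 2`. -/
def shear (k : Fin 4 → Fin 4 → R) (i : Fin 4) : R := 2 * k 0 i + C.x 0 * C.d i (k 0 0)

variable (C) in
/-- First integral of the `(0, i, j)` Killing equation: constant along `x⁰` for a Killing tensor `k`
and `i, j ≥ 2`. -/
def stress (k : Fin 4 → Fin 4 → R) (i j : Fin 4) : R :=
  4 * k i j + η i j * (4 * k 0 1 + 2 * C.x 0 * C.d 1 (k 0 0))
    - 2 * C.x 0 ^ 2 * C.d i (C.d j (k 0 0))
    + 2 * C.x 0 * (C.d i (C.shear k j) + C.d j (C.shear k i))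

variable (C) in
/-- First integral of the `(0, 1, i)` Killing equation: constant along `x⁰`, and in the end zero,
for a Killing tensor `k` and `i ≥ 2`. -/
def flux (k : Fin 4 → Fin 4 → R) (i : Fin 4) : R :=
  4 * C.x 0 * k 1 i - C.x 0 ^ 3 * C.d 1 (C.d i (k 0 0)) + C.x 0 ^ 2 * C.d 1 (C.shear k i)
    + C.x 0 * C.d i (C.profile k)

variable (C) in
/-- First integral of the `(0, 1, 1)` Killing equation: constant along `x⁰`, and in the end zero,
for a Killing tensor `k`. -/
def energy (k : Fin 4 → Fin 4 → R) : R :=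
  8 * C.x 0 ^ 2 * k 1 1 - C.x 0 ^ 4 * C.d 1 (C.d 1 (k 0 0)) + 2 * C.x 0 ^ 2 * C.d 1 (C.profile k)

omit [CharZero 𝕜] in
lemma d_x_self (i : Fin 4) : C.d i (C.x i) = 1 := by simp [C.d_x]

omit [CharZero 𝕜] in
lemma d_x_of_ne {i j : Fin 4} (h : i ≠ j) : C.d i (C.x j) = 0 := by simp [C.d_x, h]

lemma ne_zero_of_two_le {i : Fin 4} (hi : 2 ≤ i) : i ≠ 0 := by rintro rfl; simp at hi

namespace IsKillingTwoTensor

variable {k : Fin 4 → Fin 4 → R} (hk : C.IsKillingTwoTensor k)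
include hk

lemma d_zero_apply_zero_zero : C.d 0 (k 0 0) = 0 := by
  refine eq_zero_of_ofNat_mul_eq_zero 𝕜 3 (C.eq_zero_of_x_mul_eq_zero ?_)
  have h := hk.mul_add_add_eq 0 0 0
  simp only [lightConeMetric_zero_zero, zero_mul, add_zero] at h
  linear_combination h

omit [CharZero 𝕜] in
lemma cyclic_zero_zero_one :
    C.x 0 * (2 * C.d 0 (k 0 1) + C.d 1 (k 0 0)) = -2 * k 0 1 := by
  have h := hk.mul_add_add_eq 0 0 1
  simp only [lightConeMetric_zero_zero, lightConeMetric_zero_one, lightConeMetric_one_zero,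
    hk.symm 1 0] at h
  linear_combination h

lemma d_zero_profile : C.d 0 (C.profile k) = 0 := by
  have h := hk.cyclic_zero_zero_one
  simp only [profile_apply, map_add, Derivation.leibniz, Derivation.leibniz_pow, derivation_ofNat,
    C.d_x_self, C.d_zero_d_eq_zero hk.d_zero_apply_zero_zero, smul_eq_mul, nsmul_eq_mul]
  linear_combination 2 * h

lemma d_zero_shear {i : Fin 4} (hi : 2 ≤ i) : C.d 0 (C.shear k i) = 0 := by
  refine C.eq_zero_of_x_mul_eq_zero ?_
  have h := hk.mul_add_add_eq 0 0 i
  simp only [lightConeMetric_zero_zero, lightConeMetric_of_two_le, lightConeMetric_of_two_le',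
    hi, hk.symm i 0, Fin.reduceLT] at h
  simp only [shear, map_add, Derivation.leibniz, derivation_ofNat, C.d_x_self,
    C.d_zero_d_eq_zero hk.d_zero_apply_zero_zero, smul_eq_mul]
  linear_combination h

omit [CharZero 𝕜] hk in
lemma d_shear {i j : Fin 4} (hi : 2 ≤ i) :
    C.d i (C.shear k j) = 2 * C.d i (k 0 j) + C.x 0 * C.d i (C.d j (k 0 0)) := by
  simp only [shear, map_add, Derivation.leibniz, derivation_ofNat,
    C.d_x_of_ne (i := i) (j := 0) (by rintro rfl; simp at hi), smul_eq_mul]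
  ring

lemma d_zero_stress {i j : Fin 4} (hi : 2 ≤ i) (hj : 2 ≤ j) : C.d 0 (C.stress k i j) = 0 := by
  refine C.eq_zero_of_x_mul_eq_zero ?_
  have h := hk.mul_add_add_eq 0 i j
  simp only [lightConeMetric_of_two_le, lightConeMetric_of_two_le', hi, hj, hk.symm j 0,
    hk.symm 1 0, Fin.reduceLT] at h
  have h01 := hk.cyclic_zero_zero_one
  have hR := fun i => C.d_zero_d_eq_zero hk.d_zero_apply_zero_zero (i := i)
  simp only [stress, map_add, map_sub, Derivation.leibniz, Derivation.leibniz_pow, C.d_x_self,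
    derivation_ofNat, derivation_lightConeMetric, hR, C.d_zero_d_eq_zero (hR _),
    C.d_zero_d_eq_zero (hk.d_zero_shear hi), C.d_zero_d_eq_zero (hk.d_zero_shear hj),
    smul_eq_mul, nsmul_eq_mul]
  rw [d_shear hi, d_shear hj]
  linear_combination 4 * h + 2 * η i j * h01 + 2 * C.x 0 ^ 2 * C.d_comm j i (k 0 0)

lemma d_zero_flux {i : Fin 4} (hi : 2 ≤ i) : C.d 0 (C.flux k i) = 0 := by
  have h := hk.mul_add_add_eq 0 1 i
  simp only [lightConeMetric_of_two_le, lightConeMetric_of_two_le', lightConeMetric_zero_one, hi,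
    hk.symm i 0, Fin.reduceLT] at h
  have hR := fun i => C.d_zero_d_eq_zero hk.d_zero_apply_zero_zero (i := i)
  simp only [flux, map_add, map_sub, Derivation.leibniz, Derivation.leibniz_pow, C.d_x_self,
    derivation_ofNat, C.d_zero_d_eq_zero (hR _), C.d_zero_d_eq_zero (hk.d_zero_shear hi),
    C.d_zero_d_eq_zero hk.d_zero_profile, smul_eq_mul, nsmul_eq_mul]
  simp only [shear, profile_apply, map_add, Derivation.leibniz, Derivation.leibniz_pow,
    C.d_x_of_ne (i := i) (j := 0) (by rintro rfl; simp at hi), C.d_x_of_ne (i := 1) (j := 0)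
    (by simp), derivation_ofNat, smul_eq_mul, nsmul_eq_mul]
  linear_combination 4 * h + C.x 0 ^ 2 * C.d_comm i 1 (k 0 0)

lemma d_zero_energy : C.d 0 (C.energy k) = 0 := by
  have h := hk.mul_add_add_eq 0 1 1
  simp only [lightConeMetric_one_one, lightConeMetric_zero_one, lightConeMetric_one_zero,
    hk.symm 1 0] at h
  have hR := fun i => C.d_zero_d_eq_zero hk.d_zero_apply_zero_zero (i := i)
  simp only [energy, map_add, map_sub, Derivation.leibniz, Derivation.leibniz_pow, C.d_x_self,
    derivation_ofNat, C.d_zero_d_eq_zero (hR _),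
    C.d_zero_d_eq_zero hk.d_zero_profile, smul_eq_mul, nsmul_eq_mul]
  simp only [profile_apply, map_add, Derivation.leibniz, Derivation.leibniz_pow,
    C.d_x_of_ne (i := 1) (j := 0)
    (by simp), derivation_ofNat, smul_eq_mul, nsmul_eq_mul]
  linear_combination 8 * C.x 0 * h

omit [CharZero 𝕜] hk in
lemma d_profile {i : Fin 4} (hi : i ≠ 0) :
    C.d i (C.profile k) = 4 * C.x 0 * C.d i (k 0 1) + C.x 0 ^ 2 * C.d i (C.d 1 (k 0 0)) := by
  simp only [profile_apply, map_add, Derivation.leibniz, Derivation.leibniz_pow, derivation_ofNat,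
    C.d_x_of_ne hi, smul_eq_mul, nsmul_eq_mul]
  ring

omit [CharZero 𝕜] hk in
lemma d_stress {i j l : Fin 4} (hl : l ≠ 0) :
    C.d l (C.stress k i j) = 4 * C.d l (k i j)
      + η i j * (4 * C.d l (k 0 1) + 2 * C.x 0 * C.d l (C.d 1 (k 0 0)))
      - 2 * C.x 0 ^ 2 * C.d l (C.d i (C.d j (k 0 0)))
      + 2 * C.x 0 * (C.d l (C.d i (C.shear k j)) + C.d l (C.d j (C.shear k i))) := by
  simp only [stress, map_add, map_sub, Derivation.leibniz, Derivation.leibniz_pow,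
    derivation_ofNat, derivation_lightConeMetric, C.d_x_of_ne hl, smul_eq_mul, nsmul_eq_mul]
  ring

omit [CharZero 𝕜] hk in
lemma d_flux {i j : Fin 4} (hj : j ≠ 0) :
    C.d j (C.flux k i) = 4 * C.x 0 * C.d j (k 1 i) - C.x 0 ^ 3 * C.d j (C.d 1 (C.d i (k 0 0)))
      + C.x 0 ^ 2 * C.d j (C.d 1 (C.shear k i)) + C.x 0 * C.d j (C.d i (C.profile k)) := by
  simp only [flux, map_add, map_sub, Derivation.leibniz, Derivation.leibniz_pow,
    derivation_ofNat, C.d_x_of_ne hj, smul_eq_mul, nsmul_eq_mul]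
  ring

omit [CharZero 𝕜] hk in
lemma d_energy {j : Fin 4} (hj : j ≠ 0) :
    C.d j (C.energy k) = 8 * C.x 0 ^ 2 * C.d j (k 1 1) - C.x 0 ^ 4 * C.d j (C.d 1 (C.d 1 (k 0 0)))
      + 2 * C.x 0 ^ 2 * C.d j (C.d 1 (C.profile k)) := by
  simp only [energy, map_add, map_sub, Derivation.leibniz, Derivation.leibniz_pow,
    derivation_ofNat, C.d_x_of_ne hj, smul_eq_mul, nsmul_eq_mul]
  ring

lemma transverse_coeffs {i j l : Fin 4} (hi : 2 ≤ i) (hj : 2 ≤ j) (hl : 2 ≤ l) :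
    (η i j * C.flux k l + η j l * C.flux k i + η l i * C.flux k j = 0) ∧
    (C.d l (C.stress k i j) + C.d i (C.stress k j l) + C.d j (C.stress k l i)
      + η i j * C.d 1 (C.shear k l) + η j l * C.d 1 (C.shear k i)
      + η l i * C.d 1 (C.shear k j) = 0) ∧
    (η i j * C.d 1 (C.d l (k 0 0)) + η j l * C.d 1 (C.d i (k 0 0)) + η l i * C.d 1 (C.d j (k 0 0))
      + 2 * (C.d i (C.d j (C.shear k l)) + C.d j (C.d l (C.shear k i))
      + C.d l (C.d i (C.shear k j))) = 0) ∧
    C.d i (C.d j (C.d l (k 0 0))) = 0 := by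
  have hcoeffs := coeff_eq_zero_of_sum_mul_pow_eq_zero (C.d_x_self 0) (f :=
    ![-(η i j * C.flux k l + η j l * C.flux k i + η l i * C.flux k j), 0,
      C.d l (C.stress k i j) + C.d i (C.stress k j l) + C.d j (C.stress k l i)
        + η i j * C.d 1 (C.shear k l) + η j l * C.d 1 (C.shear k i) + η l i * C.d 1 (C.shear k j),
      -2 * (η i j * C.d 1 (C.d l (k 0 0)) + η j l * C.d 1 (C.d i (k 0 0))
        + η l i * C.d 1 (C.d j (k 0 0)) + 2 * (C.d i (C.d j (C.shear k l))
        + C.d j (C.d l (C.shear k i)) + C.d l (C.d i (C.shear k j)))),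
      6 * C.d i (C.d j (C.d l (k 0 0)))]) ?_ ?_
  · have h0 := congrFun hcoeffs 0
    have h2 := congrFun hcoeffs 2
    have h3 := congrFun hcoeffs 3
    have h4 := congrFun hcoeffs 4
    simp only [Matrix.cons_val, Pi.zero_apply] at h0 h2 h3 h4
    exact ⟨neg_eq_zero.1 h0, h2,
      eq_zero_of_ofNat_mul_eq_zero 𝕜 2 (by linear_combination -h3),
      eq_zero_of_ofNat_mul_eq_zero 𝕜 6 h4⟩
  · have hR := hk.d_zero_apply_zero_zero
    intro n
    fin_cases n <;> simp [Derivation.leibniz, derivation_ofNat, derivation_lightConeMetric,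
        C.d_comm 0, hk.d_zero_flux, hk.d_zero_shear, hk.d_zero_stress, hi, hj, hl, hR]
  · have h := hk.mul_add_add_eq i j l
    simp only [Nat.succ_eq_add_one, Nat.reduceAdd, neg_add_rev, neg_mul, Fin.sum_univ_five,
      Matrix.cons_val_zero, Fin.coe_ofNat_eq_mod, Nat.zero_mod, pow_zero, mul_one,
      Matrix.cons_val_one, Nat.one_mod, pow_one, zero_mul, add_zero, Matrix.cons_val, Nat.reduceMod,
      Nat.mod_succ]
    simp only [d_stress, flux, d_profile, ne_zero_of_two_le hi, ne_zero_of_two_le hj,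
      ne_zero_of_two_le hl, ne_eq, not_false_eq_true, C.d_comm l i, C.d_comm l j, C.d_comm j i,
      C.d_comm i 1, C.d_comm j 1, C.d_comm l 1]
    linear_combination 4 * C.x 0 * h

lemma flux_eq_zero {i : Fin 4} (hi : 2 ≤ i) : C.flux k i = 0 := by
  have h := (hk.transverse_coeffs hi hi hi).1
  have hη : η i i = 1 := by revert hi; fin_cases i <;> simp
  rw [hη] at h
  exact eq_zero_of_ofNat_mul_eq_zero 𝕜 3 (by linear_combination h)

lemma one_coeffs {i j : Fin 4} (hi : 2 ≤ i) (hj : 2 ≤ j) :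
    η i j * C.energy k = 0 ∧
    C.d 1 (C.stress k i j) = 2 * C.d i (C.d j (C.profile k)) ∧
    η i j * C.d 1 (C.d 1 (k 0 0)) +
      2 * C.d 1 (C.d i (C.shear k j) + C.d j (C.shear k i)) = 0 ∧
    C.d 1 (C.d i (C.d j (k 0 0))) = 0 := by
  have hcoeffs := coeff_eq_zero_of_sum_mul_pow_eq_zero (C.d_x_self 0) (f :=
    ![-(η i j * C.energy k), 0, 0,
      2 * (C.d 1 (C.stress k i j) - 2 * C.d i (C.d j (C.profile k))),
      -3 * (η i j * C.d 1 (C.d 1 (k 0 0)) + 2 * C.d 1 (C.d i (C.shear k j) + C.d j (C.shear k i))),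
      8 * C.d 1 (C.d i (C.d j (k 0 0)))]) ?_ ?_
  · have h0 := congrFun hcoeffs 0
    have h3 := congrFun hcoeffs 3
    have h4 := congrFun hcoeffs 4
    have h5 := congrFun hcoeffs 5
    simp only [Matrix.cons_val, Pi.zero_apply] at h0 h3 h4 h5
    exact ⟨neg_eq_zero.1 h0, sub_eq_zero.1 (eq_zero_of_ofNat_mul_eq_zero 𝕜 2 h3),
      eq_zero_of_ofNat_mul_eq_zero 𝕜 3 (by linear_combination -h4),
      eq_zero_of_ofNat_mul_eq_zero 𝕜 8 h5⟩
  · intro n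
    fin_cases n <;> simp [Derivation.leibniz, derivation_ofNat, derivation_lightConeMetric,
        C.d_comm 0, hk.d_zero_energy, hk.d_zero_profile, hk.d_zero_shear, hk.d_zero_stress, hi, hj,
        hk.d_zero_apply_zero_zero]
  · have h := hk.mul_add_add_eq i j 1
    have hyi := congrArg (C.d j) (hk.flux_eq_zero hi)
    have hyj := congrArg (C.d i) (hk.flux_eq_zero hj)
    simp only [lightConeMetric_of_two_le, lightConeMetric_of_two_le', hi, hj, Fin.reduceLT,
      hk.symm j 1] at h
    simp only [Nat.succ_eq_add_one, Nat.reduceAdd, map_add, neg_mul, Fin.sum_univ_six,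
      Matrix.cons_val_zero, Fin.coe_ofNat_eq_mod, Nat.zero_mod, pow_zero, mul_one,
      Matrix.cons_val_one, Nat.one_mod, pow_one, zero_mul, add_zero, Matrix.cons_val, Nat.reduceMod,
      Nat.mod_succ]
    have hq := d_profile (k := k) (C := C) one_ne_zero
    simp only [d_stress, d_flux, energy, ne_zero_of_two_le hi, ne_zero_of_two_le hj,
      ne_eq, not_false_eq_true, C.d_comm j i, C.d_comm i 1, C.d_comm j 1, map_zero,
      one_ne_zero] at hyi hyj ⊢
    linear_combination 8 * C.x 0 ^ 2 * h - 2 * C.x 0 ^ 2 * (hyi + hyj)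
      - 2 * C.x 0 ^ 2 * η i j * hq

lemma energy_eq_zero : C.energy k = 0 := by
  simpa only [lightConeMetric_two_two, one_mul] using (hk.one_coeffs le_rfl le_rfl).1

lemma one_one_coeffs {i : Fin 4} (hi : 2 ≤ i) :
    C.d 1 (C.d i (C.profile k)) = 0 ∧ C.d 1 (C.d 1 (C.shear k i)) = 0 ∧
      C.d 1 (C.d 1 (C.d i (k 0 0))) = 0 := by
  have hcoeffs := coeff_eq_zero_of_sum_mul_pow_eq_zero (C.d_x_self 0) (f :=
    ![0, 0, 0, -6 * C.d 1 (C.d i (C.profile k)), -4 * C.d 1 (C.d 1 (C.shear k i)),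
      5 * C.d 1 (C.d 1 (C.d i (k 0 0)))]) ?_ ?_
  · have h3 := congrFun hcoeffs 3
    have h4 := congrFun hcoeffs 4
    have h5 := congrFun hcoeffs 5
    simp only [Matrix.cons_val, Pi.zero_apply] at h3 h4 h5
    exact ⟨eq_zero_of_ofNat_mul_eq_zero 𝕜 6 (by linear_combination -h3),
      eq_zero_of_ofNat_mul_eq_zero 𝕜 4 (by linear_combination -h4),
      eq_zero_of_ofNat_mul_eq_zero 𝕜 5 h5⟩
  · intro n
    fin_cases n <;> simp [Derivation.leibniz, derivation_ofNat, C.d_comm 0, hk.d_zero_profile,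
      hk.d_zero_shear, hi, hk.d_zero_apply_zero_zero]
  · have h := hk.mul_add_add_eq 1 1 i
    have hy := congrArg (C.d 1) (hk.flux_eq_zero hi)
    have hp := congrArg (C.d i) hk.energy_eq_zero
    simp only [lightConeMetric_of_two_le, lightConeMetric_of_two_le', lightConeMetric_one_one, hi,
      Fin.reduceLT, hk.symm i 1] at h
    simp only [Nat.succ_eq_add_one, Nat.reduceAdd, neg_mul, Fin.sum_univ_six, Matrix.cons_val_zero,
      Fin.coe_ofNat_eq_mod, Nat.zero_mod, pow_zero, mul_one, Matrix.cons_val_one, Nat.one_mod,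
      pow_one, zero_mul, add_zero, Matrix.cons_val, Nat.reduceMod, zero_add, Nat.mod_succ]
    simp only [d_flux, d_energy, ne_zero_of_two_le hi, ne_eq, not_false_eq_true, C.d_comm i 1,
      map_zero, one_ne_zero] at hy hp ⊢
    linear_combination 8 * C.x 0 ^ 2 * h - 4 * C.x 0 ^ 2 * hy - C.x 0 * hp

lemma one_one_one_coeffs :
    C.d 1 (C.d 1 (C.profile k)) = 0 ∧ C.d 1 (C.d 1 (C.d 1 (k 0 0))) = 0 := by
  have hcoeffs := coeff_eq_zero_of_sum_mul_pow_eq_zero (C.d_x_self 0) (f :=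
    ![0, 0, 0, -6 * C.d 1 (C.d 1 (C.profile k)), 0, 3 * C.d 1 (C.d 1 (C.d 1 (k 0 0)))]) ?_ ?_
  · have h3 := congrFun hcoeffs 3
    have h5 := congrFun hcoeffs 5
    simp only [Matrix.cons_val, Pi.zero_apply] at h3 h5
    exact ⟨eq_zero_of_ofNat_mul_eq_zero 𝕜 6 (by linear_combination -h3),
      eq_zero_of_ofNat_mul_eq_zero 𝕜 3 h5⟩
  · intro n
    fin_cases n <;> simp [Derivation.leibniz, derivation_ofNat, C.d_comm 0, hk.d_zero_profile,
      hk.d_zero_apply_zero_zero]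
  · have h := hk.mul_add_add_eq 1 1 1
    have hp := congrArg (C.d 1) hk.energy_eq_zero
    simp only [lightConeMetric_one_one] at h
    simp only [Nat.succ_eq_add_one, Nat.reduceAdd, neg_mul, Fin.sum_univ_six, Matrix.cons_val_zero,
      Fin.coe_ofNat_eq_mod, Nat.zero_mod, pow_zero, mul_one, Matrix.cons_val_one, Nat.one_mod,
      pow_one, zero_mul, add_zero, Matrix.cons_val, Nat.reduceMod, zero_add, Nat.mod_succ]
    simp only [d_energy, ne_eq, not_false_eq_true, map_zero, one_ne_zero] at hp
    linear_combination 8 * C.x 0 ^ 2 * h - 3 * C.x 0 * hp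

lemma d_d_d_profile_of_two_le {i j l : Fin 4} (hi : 2 ≤ i) (hj : 2 ≤ j) (hl : 2 ≤ l) :
    C.d i (C.d j (C.d l (C.profile k))) = 0 := by
  have h := congrArg (C.d 1) (hk.transverse_coeffs hi hj hl).2.1
  simp only [map_add, Derivation.leibniz, derivation_lightConeMetric, C.d_comm 1 i, C.d_comm 1 j,
    C.d_comm 1 l, (hk.one_coeffs _ _).2.1, (hk.one_one_coeffs _).2.1, hi, hj, hl, smul_eq_mul,
    derivation_ofNat, C.d_comm l i, C.d_comm l j, C.d_comm j i, map_zero] at h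
  exact eq_zero_of_ofNat_mul_eq_zero 𝕜 6 (by linear_combination h)

end IsKillingTwoTensor

end Killing

section Polynomial

/-- The functions `1, x 1, x 2, x 3`, which span the affine functions of the transverse
coordinates `x 1, x 2, x 3`. -/
def affineCoord (C : HalfSpaceChart 𝕜 R) : Fin 4 → R := Function.update C.x 0 1

variable {f : R} {M : Submodule 𝕜 R}

lemma mem_of_d_d_eq_zero (h₀ : C.d 0 f = 0) (h₂ : ∀ a b, C.d a (C.d b f) = 0)
    (hM : ∀ a, C.affineCoord a ∈ M) : f ∈ M := by
  choose c hc using fun a => C.exists_algebraMap_eq (C.d a f) (fun b => h₂ b a)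
  obtain ⟨r, hr⟩ := C.exists_algebraMap_eq (f - ∑ a : Fin 3, c a.succ • C.x a.succ) fun i => by
    refine Fin.cases ?_ (fun j => ?_) i
    · simp [C.d_x, h₀, Algebra.smul_def, (Fin.succ_ne_zero _).symm]
    · simp [C.d_x, ← hc, Algebra.smul_def]
  have hf : f = r • C.affineCoord 0 + ∑ a : Fin 3, c a.succ • C.affineCoord a.succ := by
    simp [affineCoord, Algebra.smul_def, hr]
  rw [hf]
  exact M.add_mem (M.smul_mem _ (hM 0)) (M.sum_mem fun a _ => M.smul_mem _ (hM _))

lemma mem_of_d_d_d_eq_zero [CharZero 𝕜] (h₀ : C.d 0 f = 0)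
    (h₃ : ∀ a b c, C.d a (C.d b (C.d c f)) = 0) (hM : ∀ a, C.affineCoord a ∈ M)
    (hM₂ : ∀ a b, C.d a (C.d b f) = 0 ∨ C.x a * C.x b ∈ M) : f ∈ M := by
  choose c hc using fun a b => C.exists_algebraMap_eq (C.d a (C.d b f)) (fun e => h₃ e a b)
  set g : R := ∑ a, ∑ b, c a b • (C.x a * C.x b) with hg
  have hgM : g ∈ M := M.sum_mem fun a _ => M.sum_mem fun b _ => by
    rcases hM₂ a b with h | h
    · rw [Algebra.smul_def, hc, h, zero_mul]
      exact M.zero_mem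
    · exact M.smul_mem _ h
  have hdg : ∀ e, C.d e g = 2 * ∑ a, C.d e (C.d a f) * C.x a := fun e => by
    simp only [hg, hc, h₃, Algebra.smul_def, map_sum, Derivation.leibniz, C.d_x,
      mul_ite, mul_one, mul_zero, mul_add, add_zero, Finset.sum_add_distrib, Finset.sum_ite_eq,
      Finset.mem_univ, if_true, Finset.sum_ite_irrel, Finset.sum_const_zero]
    simp [C.d_comm _ e, two_mul]
  have haff : 2 * f - g ∈ M := by
    refine mem_of_d_d_eq_zero ?_ (fun a b => ?_) hM
    · simp [Derivation.leibniz, derivation_ofNat, hdg, h₀, C.d_comm 0]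
    · simp [hdg, derivation_ofNat, Derivation.leibniz, h₃, C.d_x, C.d_comm b a]
  have hf : f = (2⁻¹ : 𝕜) • ((2 * f - g) + g) := by
    rw [sub_add_cancel, inv_ofNat_smul_ofNat_mul]
  rw [hf]
  exact M.smul_mem _ (M.add_mem haff hgM)

end Polynomial

section Models

variable (C)

/-- The symmetric tensor with `profile` equal to `4 * f` and no other free data. -/
def profileTensor : R →ₗ[𝕜] Fin 4 → Fin 4 → R where
  toFun f := ![![0, C.xInv * f, 0, 0],
    ![C.xInv * f, -C.d 1 f, -C.d 2 f, -C.d 3 f],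
    ![0, -C.d 2 f, 2 * C.x 1 * C.d 2 (C.d 2 f) - C.xInv * f, 2 * C.x 1 * C.d 2 (C.d 3 f)],
    ![0, -C.d 3 f, 2 * C.x 1 * C.d 2 (C.d 3 f), 2 * C.x 1 * C.d 3 (C.d 3 f) - C.xInv * f]]
  map_add' f g := by
    funext a b
    fin_cases a <;> fin_cases b <;> simp <;> ring
  map_smul' r f := by
    funext a b
    fin_cases a <;> fin_cases b <;> simp [Algebra.smul_def, Derivation.leibniz] <;> ring

lemma d_xInv (i : Fin 4) : C.d i C.xInv = - (C.xInv ^ 2 * C.d i (C.x 0)) := by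
  have h := congrArg (C.d i) C.x_mul_xInv
  simp only [Derivation.leibniz, Derivation.map_one_eq_zero, smul_eq_mul] at h
  linear_combination C.xInv * h - C.d i C.xInv * C.x_mul_xInv

lemma profile_profileTensor (f : R) : C.profile (C.profileTensor f) = 4 * f := by
  simp only [profileTensor, LinearMap.coe_mk, AddHom.coe_mk, profile_apply, Matrix.cons_val',
    Matrix.cons_val_one, Matrix.cons_val_zero, Matrix.cons_val_fin_one, map_zero, mul_zero,
    add_zero]
  linear_combination 4 * f * C.x_mul_xInv

/-- The components `η / x⁰` of the metric `x⁰ η` in the frame `(1 / x⁰) ∂ₐ`. -/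
def metric (a b : Fin 4) : R := C.xInv * η a b

lemma profileTensor_one : C.profileTensor 1 = -C.metric := by
  funext a b
  fin_cases a <;> fin_cases b <;> simp [profileTensor, metric, lightConeMetric]

variable {C}

lemma IsKillingTwoTensor.of_cyclic_of_le {k : Fin 4 → Fin 4 → R} (hsymm : ∀ a b, k a b = k b a)
    (hcyc : ∀ a b c, a ≤ b → b ≤ c → C.x 0 * (C.d c (k a b) + C.d a (k b c) + C.d b (k a c)) =
      η a b * k 1 c + η b c * k 1 a + η a c * k 1 b) : C.IsKillingTwoTensor k := by
  refine (isKillingTwoTensor_iff hsymm).2 fun a b c => ?_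
  rw [hsymm c a, lightConeMetric_symm c a]
  rcases le_total a b with hab | hab <;> rcases le_total b c with hbc | hbc <;>
    rcases le_total a c with hac | hac
  · exact hcyc a b c hab hbc
  · exact hcyc a b c hab hbc
  · have h := hcyc a c b hac hbc
    rw [hsymm c b, lightConeMetric_symm c b] at h
    linear_combination h
  · have h := hcyc c a b hac hab
    rw [hsymm c b, hsymm c a, lightConeMetric_symm c b, lightConeMetric_symm c a] at h
    linear_combination h
  · have h := hcyc b a c hab hac
    rw [hsymm b a, lightConeMetric_symm b a] at h
    linear_combination h
  · have h := hcyc b c a hbc hac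
    rw [hsymm b a, hsymm c a, lightConeMetric_symm b a, lightConeMetric_symm c a] at h
    linear_combination h
  all_goals
  · have h := hcyc c b a hbc hab
    rw [hsymm c b, hsymm b a, hsymm c a, lightConeMetric_symm c b, lightConeMetric_symm b a,
      lightConeMetric_symm c a] at h
    linear_combination h

lemma isKillingTwoTensor_profileTensor {f : R} (h₀ : C.d 0 f = 0) (h₁ : ∀ a, C.d 1 (C.d a f) = 0)
    (h₃ : ∀ a b c, C.d a (C.d b (C.d c f)) = 0) : C.IsKillingTwoTensor (C.profileTensor f) := by
  refine .of_cyclic_of_le (fun a b => ?_) fun a b c hab hbc => ?_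
  · fin_cases a <;> fin_cases b <;> rfl
  · have hτ := C.x_mul_xInv
    have h21 : C.d 2 (C.d 1 f) = 0 := by rw [C.d_comm, h₁]
    have h31 : C.d 3 (C.d 1 f) = 0 := by rw [C.d_comm, h₁]
    have h23 := C.d_comm 3 2 f
    fin_cases a <;> fin_cases b <;> (try exact absurd hab (by decide)) <;> fin_cases c <;>
      (try exact absurd hbc (by decide)) <;>
      simp [profileTensor, lightConeMetric, Derivation.leibniz, C.d_xInv, derivation_ofNat, h₀,
        h₁, h₃, C.d_comm 0, C.d_x, h21, h31, h23]
    all_goals grind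

lemma isKillingForm_translation {i : Fin 4} (hi : i ≠ 1) : C.IsKillingForm (Pi.single i 1) := by
  refine isKillingForm_iff.2 fun a b => ?_
  fin_cases i <;> fin_cases a <;> fin_cases b <;> simp_all

lemma isKillingForm_nullRotation {i : Fin 4} (hi : 2 ≤ i) :
    C.IsKillingForm (Pi.single 0 (C.x i) - Pi.single i (C.x 0)) := by
  refine isKillingForm_iff.2 fun a b => ?_
  fin_cases i <;> fin_cases a <;> fin_cases b <;> simp_all [C.d_x]

variable (C) in
/-- The covector `x 2 dx 3 - x 3 dx 2` of the rotation in the transverse plane. -/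
def rotation : Fin 4 → R := ![0, 0, -C.x 3, C.x 2]

lemma isKillingForm_rotation : C.IsKillingForm C.rotation := by
  refine isKillingForm_iff.2 fun a b => ?_
  fin_cases a <;> fin_cases b <;> simp [rotation, C.d_x]

variable (C) in
/-- The covector of the vector field `2 x⁰ ∂₀ - 4 x¹ ∂₁ - x² ∂₂ - x³ ∂₃`, a boost combined with a
dilation so as to preserve `x⁰ η`. -/
def boost : Fin 4 → R := ![4 * C.x 1, -2 * C.x 0, -C.x 2, -C.x 3]

lemma isKillingForm_boost : C.IsKillingForm C.boost := by
  refine isKillingForm_iff.2 fun a b => ?_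
  fin_cases a <;> fin_cases b <;>
    simp [boost, C.d_x, Derivation.leibniz, derivation_ofNat, lightConeMetric] <;> ring

lemma exists_isKillingForm_apply_zero_eq [CharZero 𝕜] (a : Fin 4) :
    ∃ α, C.IsKillingForm α ∧ α 0 = C.affineCoord a := by
  fin_cases a
  · exact ⟨_, isKillingForm_translation (i := 0) (by decide), by simp [affineCoord]⟩
  · exact ⟨_, isKillingForm_boost.smul 4⁻¹, by
      simp [boost, affineCoord, inv_ofNat_smul_ofNat_mul]⟩
  · exact ⟨_, isKillingForm_nullRotation (i := 2) (by decide), by simp [affineCoord]⟩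
  · exact ⟨_, isKillingForm_nullRotation (i := 3) (by decide), by simp [affineCoord]⟩

end Models

section Reduction

lemma d_d_d_eq_zero {f : R} (h₀ : C.d 0 f = 0)
    (h₁ : ∀ a b, 1 ≤ a → 1 ≤ b → C.d 1 (C.d a (C.d b f)) = 0)
    (h₂ : ∀ a b c, 2 ≤ a → 2 ≤ b → 2 ≤ c → C.d a (C.d b (C.d c f)) = 0) (a b c : Fin 4) :
    C.d a (C.d b (C.d c f)) = 0 := by
  have hcases : ∀ i : Fin 4, i = 0 ∨ i = 1 ∨ 2 ≤ i := by decide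
  have hle : ∀ {i : Fin 4}, i = 1 ∨ 2 ≤ i → 1 ≤ i := by decide
  rcases hcases a with rfl | ha
  · simp only [C.d_comm 0, h₀, map_zero]
  rcases hcases b with rfl | hb
  · simp only [C.d_comm 0, h₀, map_zero]
  rcases hcases c with rfl | hc
  · simp only [h₀, map_zero]
  rcases ha with rfl | ha
  · exact h₁ b c (hle hb) (hle hc)
  rcases hb with rfl | hb
  · rw [C.d_comm, h₁ a c (hle (.inr ha)) (hle hc)]
  rcases hc with rfl | hc
  · rw [C.d_comm b 1, C.d_comm a 1, h₁ a b (hle (.inr ha)) (hle (.inr hb))]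
  · exact h₂ a b c ha hb hc

variable [CharZero 𝕜]

namespace IsKillingTwoTensor

variable {k : Fin 4 → Fin 4 → R} (hk : C.IsKillingTwoTensor k)
include hk

lemma d_d_d_apply_zero_zero (a b c : Fin 4) : C.d a (C.d b (C.d c (k 0 0))) = 0 := by
  have hcases : ∀ {i : Fin 4}, 1 ≤ i → i = 1 ∨ 2 ≤ i := by decide
  refine d_d_d_eq_zero hk.d_zero_apply_zero_zero (fun i j hi hj => ?_)
    (fun i j l hi hj hl => (hk.transverse_coeffs hi hj hl).2.2.2) a b c
  rcases hcases hi with rfl | hi <;> rcases hcases hj with rfl | hj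
  · exact hk.one_one_one_coeffs.2
  · exact (hk.one_one_coeffs hj).2.2
  · rw [C.d_comm i 1, (hk.one_one_coeffs hi).2.2]
  · exact (hk.one_coeffs hi hj).2.2.2

lemma d_one_d_profile (a : Fin 4) : C.d 1 (C.d a (C.profile k)) = 0 := by
  have hcases : ∀ i : Fin 4, i = 0 ∨ i = 1 ∨ 2 ≤ i := by decide
  rcases hcases a with rfl | rfl | ha
  · rw [hk.d_zero_profile, map_zero]
  · exact hk.one_one_one_coeffs.1
  · exact (hk.one_one_coeffs ha).1

lemma d_d_d_profile (a b c : Fin 4) : C.d a (C.d b (C.d c (C.profile k))) = 0 :=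
  d_d_d_eq_zero hk.d_zero_profile
    (fun i j _ _ => by rw [C.d_comm 1 i, hk.d_one_d_profile, map_zero])
    (fun _ _ _ hi hj hl => hk.d_d_d_profile_of_two_le hi hj hl) a b c

end IsKillingTwoTensor

lemma exists_mem_killingProducts_apply_zero_zero_eq {f : R} (h₀ : C.d 0 f = 0)
    (h₃ : ∀ a b c, C.d a (C.d b (C.d c f)) = 0) :
    ∃ p ∈ C.connection.killingProducts, p 0 0 = f := by
  let M := C.connection.killingProducts.map
    (LinearMap.proj 0 ∘ₗ LinearMap.proj (R := 𝕜) (φ := fun _ : Fin 4 => Fin 4 → R) 0)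
  choose α hα hα₀ using exists_isKillingForm_apply_zero_eq (C := C)
  have hmem : ∀ a b, C.affineCoord a * C.affineCoord b ∈ M := by
    refine fun a b => ⟨(2⁻¹ : 𝕜) • symmProd (α a) (α b),
      Submodule.smul_mem _ _ (FrameConnection.symmProd_mem_killingProducts (hα a) (hα b)), ?_⟩
    simp only [LinearMap.comp_apply, LinearMap.proj_apply, Pi.smul_apply, symmProd, hα₀]
    rw [← two_mul, inv_ofNat_smul_ofNat_mul]
  refine mem_of_d_d_d_eq_zero (M := M) h₀ h₃ (fun a => ?_) fun a b => ?_
  · simpa [affineCoord] using hmem 0 a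
  · rcases eq_or_ne a 0 with rfl | ha
    · exact .inl (by rw [C.d_comm, h₀, map_zero])
    rcases eq_or_ne b 0 with rfl | hb
    · exact .inl (by rw [h₀, map_zero])
    · exact .inr (by simpa [affineCoord, ha, hb] using hmem a b)

lemma d_d_d_eq_zero_of_d_d_eq_neg_two_mul {i j : Fin 4} {m n : R}
    (hm : C.d j (C.d j m) = -2 * C.d i (C.d j n)) (hn : C.d i (C.d i n) = -2 * C.d i (C.d j m)) :
    C.d i (C.d j (C.d j m)) = 0 := by
  refine eq_zero_of_ofNat_mul_eq_zero 𝕜 3 ?_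
  have h := congrArg (C.d i) hm
  have h' := congrArg (C.d j) hn
  simp only [Derivation.leibniz, map_neg, derivation_ofNat, C.d_comm j i, smul_eq_mul] at h h'
  linear_combination -h + 2 * h'

lemma exists_rotational_part {m n : R} (hm₀ : C.d 0 m = 0) (hn₀ : C.d 0 n = 0)
    (hm₁₁ : C.d 1 (C.d 1 m) = 0) (hn₁₁ : C.d 1 (C.d 1 n) = 0)
    (hm₁₂ : C.d 1 (C.d 2 m) = 0) (hn₁₃ : C.d 1 (C.d 3 n) = 0)
    (h₁ : C.d 1 (C.d 2 n) = -C.d 1 (C.d 3 m))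
    (hm₂₂ : C.d 2 (C.d 2 m) = 0) (hn₂₂ : C.d 2 (C.d 2 n) = -2 * C.d 2 (C.d 3 m))
    (hm₃₃ : C.d 3 (C.d 3 m) = -2 * C.d 2 (C.d 3 n)) (hn₃₃ : C.d 3 (C.d 3 n) = 0) :
    ∃ f ∈ Submodule.span 𝕜 (Set.range C.affineCoord),
      (∀ a b, C.d a (C.d b (m + f * C.x 3)) = 0) ∧ ∀ a b, C.d a (C.d b (n - f * C.x 2)) = 0 := by
  have hm₂₃₃ : C.d 2 (C.d 3 (C.d 3 m)) = 0 := d_d_d_eq_zero_of_d_d_eq_neg_two_mul hm₃₃ hn₂₂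
  have hn₂₂₃ : C.d 2 (C.d 2 (C.d 3 n)) = 0 := by
    rw [C.d_comm 2 3, C.d_comm 2 3]
    rw [C.d_comm 2 3] at hn₂₂ hm₃₃
    exact d_d_d_eq_zero_of_d_d_eq_neg_two_mul hn₂₂ hm₃₃
  obtain ⟨r₁, hr₁⟩ := C.exists_algebraMap_eq (C.d 1 (C.d 3 m)) fun i => by
    fin_cases i
    · simp [C.d_comm 0, hm₀]
    · simp [C.d_comm 1 3, hm₁₁]
    · simp [C.d_comm 1 3, C.d_comm 2 3, C.d_comm 2 1, hm₁₂]
    · rw [← neg_eq_iff_eq_neg.2 h₁]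
      simp [C.d_comm 1 2, C.d_comm 3 2, C.d_comm 3 1, hn₁₃]
  obtain ⟨r₂, hr₂⟩ := C.exists_algebraMap_eq (C.d 2 (C.d 3 m)) fun i => by
    fin_cases i
    · simp [C.d_comm 0, hm₀]
    · simp [C.d_comm 2 3, C.d_comm 1 3, hm₁₂]
    · simp [C.d_comm 2 3, hm₂₂]
    · simp [C.d_comm 3 2, hm₂₃₃]
  obtain ⟨r₃, hr₃⟩ := C.exists_algebraMap_eq (C.d 2 (C.d 3 n)) fun i => by
    fin_cases i
    · simp [C.d_comm 0, hn₀]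
    · simp [C.d_comm 1 2, hn₁₃]
    · exact hn₂₂₃
    · simp [C.d_comm 3 2, hn₃₃]
  have hmem : ∀ r : 𝕜, ∀ a, a ≠ 0 → r • C.x a ∈ Submodule.span 𝕜 (Set.range C.affineCoord) :=
    fun r a ha => Submodule.smul_mem _ _ (Submodule.subset_span ⟨a, by simp [affineCoord, ha]⟩)
  refine ⟨-(r₁ • C.x 1) - r₂ • C.x 2 + r₃ • C.x 3, ?_, fun a b => ?_, fun a b => ?_⟩
  · exact add_mem (sub_mem (neg_mem (hmem _ _ (by decide))) (hmem _ _ (by decide)))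
      (hmem _ _ (by decide))
  all_goals
    fin_cases a <;> fin_cases b <;>
      simp [Algebra.smul_def, ← hr₁, ← hr₂, ← hr₃, Derivation.leibniz, C.d_comm 0, C.d_comm 2 1,
        C.d_comm 3 1, C.d_comm 3 2, hm₀, hn₀, hm₁₁, hn₁₁, hm₁₂, hn₁₃, h₁, hm₂₂, hn₂₂, hm₃₃, hn₃₃,
        C.d_x]
    ring

lemma exists_mem_killingProducts_apply_zero_eq_smul {β : Fin 4 → R} (hβ : C.IsKillingForm β)
    (hβ₀ : β 0 = 0) {f : R} (hf : f ∈ Submodule.span 𝕜 (Set.range C.affineCoord)) :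
    ∃ p ∈ C.connection.killingProducts, p 0 = f • β := by
  suffices Submodule.span 𝕜 (Set.range C.affineCoord) ≤
      (C.connection.killingProducts.map (LinearMap.proj 0)).comap
        (LinearMap.toSpanSingleton R _ β |>.restrictScalars 𝕜) from this hf
  refine Submodule.span_le.2 (Set.range_subset_iff.2 fun a => ?_)
  obtain ⟨α, hα, hα₀⟩ := exists_isKillingForm_apply_zero_eq (C := C) a
  refine ⟨symmProd α β, FrameConnection.symmProd_mem_killingProducts hα hβ, funext fun b => ?_⟩
  simp [symmProd, hα₀, hβ₀]

lemma exists_mem_killingProducts_apply_zero_eq_single {i : Fin 4} (hi : 2 ≤ i) {f : R}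
    (h₀ : C.d 0 f = 0) (h₂ : ∀ a b, C.d a (C.d b f) = 0) :
    ∃ p ∈ C.connection.killingProducts, p 0 = Pi.single i f := by
  have hspan := mem_of_d_d_eq_zero h₀ h₂ fun a =>
    Submodule.subset_span (R := 𝕜) (Set.mem_range_self (f := C.affineCoord) a)
  obtain ⟨p, hp, hp₀⟩ := exists_mem_killingProducts_apply_zero_eq_smul
    (isKillingForm_translation (C := C) (i := i) (by rintro rfl; simp at hi))
    (Pi.single_eq_of_ne (by rintro rfl; simp at hi) _) hspan
  exact ⟨p, hp, by rw [hp₀, ← Pi.single_smul', smul_eq_mul, mul_one]⟩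

lemma exists_mem_killingProducts_apply_zero_eq {w : Fin 4 → R} (h₀ : ∀ i, C.d 0 (w i) = 0)
    (hw₀ : w 0 = 0) (hw₁ : w 1 = 0)
    (h₁ : ∀ i j, 2 ≤ i → 2 ≤ j → C.d 1 (C.d i (w j) + C.d j (w i)) = 0)
    (h₁₁ : ∀ i, C.d 1 (C.d 1 (w i)) = 0)
    (h₂ : ∀ i j l, 2 ≤ i → 2 ≤ j → 2 ≤ l →
      C.d i (C.d j (w l)) + C.d j (C.d l (w i)) + C.d l (C.d i (w j)) = 0) :
    ∃ p ∈ C.connection.killingProducts, p 0 = w := by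
  have h₁₂ : C.d 1 (C.d 2 (w 2)) = 0 :=
    eq_zero_of_ofNat_mul_eq_zero 𝕜 2 (by simpa only [two_mul, map_add] using h₁ 2 2 le_rfl le_rfl)
  have h₁₃ : C.d 1 (C.d 3 (w 3)) = 0 := eq_zero_of_ofNat_mul_eq_zero 𝕜 2
    (by simpa only [two_mul, map_add] using h₁ 3 3 (by decide) (by decide))
  have h₁₂₃ := h₁ 2 3 le_rfl (by decide)
  have h₂₂₂ := h₂ 2 2 2 le_rfl le_rfl le_rfl
  have h₂₂₃ := h₂ 2 2 3 le_rfl le_rfl (by decide)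
  have h₂₃₃ := h₂ 2 3 3 le_rfl (by decide) (by decide)
  have h₃₃₃ := h₂ 3 3 3 (by decide) (by decide) (by decide)
  rw [C.d_comm 3 2] at h₂₂₃ h₂₃₃
  obtain ⟨f, hf, hm, hn⟩ := exists_rotational_part (h₀ 2) (h₀ 3) (h₁₁ 2) (h₁₁ 3) h₁₂ h₁₃
    (eq_neg_of_add_eq_zero_left (by rwa [map_add] at h₁₂₃))
    (eq_zero_of_ofNat_mul_eq_zero 𝕜 3 (by linear_combination h₂₂₂))
    (by linear_combination h₂₂₃) (by linear_combination h₂₃₃)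
    (eq_zero_of_ofNat_mul_eq_zero 𝕜 3 (by linear_combination h₃₃₃))
  have hf₀ : C.d 0 f = 0 := by
    suffices Submodule.span 𝕜 (Set.range C.affineCoord) ≤ LinearMap.ker (C.d 0).toLinearMap from
      this hf
    refine Submodule.span_le.2 (Set.range_subset_iff.2 fun a => ?_)
    fin_cases a <;> simp [affineCoord, C.d_x]
  have hw : w = f • C.rotation +
      (Pi.single 2 (w 2 + f * C.x 3) + Pi.single 3 (w 3 - f * C.x 2)) := by
    funext a
    fin_cases a <;> simp [rotation, hw₀, hw₁]
  obtain ⟨p, hp, hp₀⟩ := exists_mem_killingProducts_apply_zero_eq_smul isKillingForm_rotation rfl hf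
  obtain ⟨p₂, hp₂, hp₂₀⟩ := exists_mem_killingProducts_apply_zero_eq_single (i := 2) le_rfl
    (by simp [Derivation.leibniz, h₀, hf₀, C.d_x]) hm
  obtain ⟨p₃, hp₃, hp₃₀⟩ := exists_mem_killingProducts_apply_zero_eq_single (i := 3) (by decide)
    (by simp [Derivation.leibniz, h₀, hf₀, C.d_x]) hn
  exact ⟨p + (p₂ + p₃), add_mem hp (add_mem hp₂ hp₃), by
    rw [hw, Pi.add_apply, Pi.add_apply, hp₀, hp₂₀, hp₃₀]⟩

omit [CharZero 𝕜] in
lemma exists_algebraMap_eq_of_d_eq_zero (C : HalfSpaceChart 𝕜 R) {f : R}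
    (h : ∀ i < 2, C.d i f = 0) (h₂ : C.d 2 f = 0) (h₃ : C.d 3 f = 0) :
    ∃ r : 𝕜, algebraMap 𝕜 R r = f :=
  C.exists_algebraMap_eq f fun i => by
    fin_cases i
    exacts [h 0 (by decide), h 1 (by decide), h₂, h₃]

omit [CharZero 𝕜] in
lemma d_x_of_lt_two {i : Fin 4} (hi : i < 2) : C.d i (C.x 2) = 0 ∧ C.d i (C.x 3) = 0 :=
  ⟨C.d_x_of_ne (by rintro rfl; simp at hi), C.d_x_of_ne (by rintro rfl; simp at hi)⟩

omit [CharZero 𝕜] in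
lemma exists_bilinear_coefficients {b : R} (hb : ∀ i < 2, C.d i b = 0)
    (hb₂₂ : C.d 2 (C.d 2 b) = 0) (hb₃₃ : C.d 3 (C.d 3 b) = 0) :
    ∃ s r₂ r₃ p : 𝕜, b = algebraMap 𝕜 R s + algebraMap 𝕜 R r₂ * C.x 2 + algebraMap 𝕜 R r₃ * C.x 3
      + algebraMap 𝕜 R p * C.x 2 * C.x 3 := by
  obtain ⟨p, hp⟩ := C.exists_algebraMap_eq_of_d_eq_zero (f := C.d 2 (C.d 3 b))
    (fun i hi => by rw [C.d_comm, C.d_comm i, hb i hi, map_zero, map_zero])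
    (by rw [C.d_comm 2 3, C.d_comm 2 3, hb₂₂, map_zero])
    (by rw [C.d_comm 3 2, hb₃₃, map_zero])
  obtain ⟨r₂, hr₂⟩ := C.exists_algebraMap_eq_of_d_eq_zero (f := C.d 2 b - algebraMap 𝕜 R p * C.x 3)
    (fun i hi => by simp [C.d_comm i 2, hb i hi, d_x_of_lt_two hi, Derivation.leibniz])
    (by simp [hb₂₂, C.d_x, Derivation.leibniz])
    (by simp [← hp, C.d_comm 3 2, C.d_x, Derivation.leibniz])
  obtain ⟨r₃, hr₃⟩ := C.exists_algebraMap_eq_of_d_eq_zero (f := C.d 3 b - algebraMap 𝕜 R p * C.x 2)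
    (fun i hi => by simp [C.d_comm i 3, hb i hi, d_x_of_lt_two hi, Derivation.leibniz])
    (by simp [← hp, C.d_x, Derivation.leibniz])
    (by simp [hb₃₃, C.d_x, Derivation.leibniz])
  obtain ⟨s, hs⟩ := C.exists_algebraMap_eq_of_d_eq_zero (f := b - algebraMap 𝕜 R r₂ * C.x 2
      - algebraMap 𝕜 R r₃ * C.x 3 - algebraMap 𝕜 R p * (C.x 2 * C.x 3))
    (fun i hi => by simp [hb i hi, d_x_of_lt_two hi, Derivation.leibniz])
    (by
      simp only [map_sub, Derivation.leibniz, C.d_x, ↓reduceIte, smul_eq_mul, mul_one,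
        Derivation.map_algebraMap, mul_zero, add_zero, Fin.reduceEq, sub_zero, zero_add]
      linear_combination -hr₂)
    (by
      simp only [map_sub, Derivation.leibniz, C.d_x, Fin.reduceEq, ↓reduceIte, smul_eq_mul,
        mul_zero, Derivation.map_algebraMap, add_zero, sub_zero, mul_one]
      linear_combination -hr₃)
  exact ⟨s, r₂, r₃, p, by linear_combination -hs⟩

lemma exists_transverse_coefficients {a b c : R} (ha : C.d 2 a = 0) (hc : C.d 3 c = 0)
    (hab : C.d 3 a = -2 * C.d 2 b) (hbc : C.d 2 c = -2 * C.d 3 b)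
    (ha' : ∀ i < 2, C.d i a = 0) (hb' : ∀ i < 2, C.d i b = 0) (hc' : ∀ i < 2, C.d i c = 0) :
    ∃ r s t r₂ r₃ p : 𝕜,
      a = algebraMap 𝕜 R r - 2 * algebraMap 𝕜 R r₂ * C.x 3 - algebraMap 𝕜 R p * C.x 3 ^ 2 ∧
      b = algebraMap 𝕜 R s + algebraMap 𝕜 R r₂ * C.x 2 + algebraMap 𝕜 R r₃ * C.x 3
        + algebraMap 𝕜 R p * C.x 2 * C.x 3 ∧
      c = algebraMap 𝕜 R t - 2 * algebraMap 𝕜 R r₃ * C.x 2 - algebraMap 𝕜 R p * C.x 2 ^ 2 := by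
  have hb₂₂ : C.d 2 (C.d 2 b) = 0 := by
    refine eq_zero_of_ofNat_mul_eq_zero 𝕜 2 ?_
    have h := congrArg (C.d 2) hab
    rw [C.d_comm, ha] at h
    simp only [Derivation.leibniz, map_neg, derivation_ofNat, map_zero, smul_eq_mul] at h
    linear_combination h
  have hb₃₃ : C.d 3 (C.d 3 b) = 0 := by
    refine eq_zero_of_ofNat_mul_eq_zero 𝕜 2 ?_
    have h := congrArg (C.d 3) hbc
    rw [C.d_comm, hc] at h
    simp only [Derivation.leibniz, map_neg, derivation_ofNat, map_zero, smul_eq_mul] at h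
    linear_combination h
  obtain ⟨s, r₂, r₃, p, rfl⟩ := exists_bilinear_coefficients hb' hb₂₂ hb₃₃
  obtain ⟨r, hr⟩ := C.exists_algebraMap_eq_of_d_eq_zero
    (f := a + 2 * algebraMap 𝕜 R r₂ * C.x 3 + algebraMap 𝕜 R p * C.x 3 ^ 2)
    (fun i hi => by
      simp [ha' i hi, d_x_of_lt_two hi, Derivation.leibniz, Derivation.leibniz_pow,
        derivation_ofNat])
    (by simp [ha, C.d_x, Derivation.leibniz, Derivation.leibniz_pow, derivation_ofNat])
    (by
      simp only [map_add, hab, Derivation.map_algebraMap, Derivation.leibniz, C.d_x, ↓reduceIte,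
        smul_eq_mul, mul_one, mul_zero, add_zero, zero_add, Fin.reduceEq, neg_mul, derivation_ofNat,
        Derivation.leibniz_pow, Nat.add_one_sub_one, pow_one, nsmul_eq_mul, Nat.cast_ofNat]
      ring)
  obtain ⟨t, ht⟩ := C.exists_algebraMap_eq_of_d_eq_zero
    (f := c + 2 * algebraMap 𝕜 R r₃ * C.x 2 + algebraMap 𝕜 R p * C.x 2 ^ 2)
    (fun i hi => by
      simp [hc' i hi, d_x_of_lt_two hi, Derivation.leibniz, Derivation.leibniz_pow,
        derivation_ofNat])
    (by
      simp only [map_add, hbc, Derivation.map_algebraMap, Derivation.leibniz, C.d_x, Fin.reduceEq,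
        ↓reduceIte, smul_eq_mul, mul_zero, add_zero, mul_one, zero_add, neg_mul, derivation_ofNat,
        Derivation.leibniz_pow, Nat.add_one_sub_one, pow_one, nsmul_eq_mul, Nat.cast_ofNat]
      ring)
    (by simp [hc, C.d_x, Derivation.leibniz, Derivation.leibniz_pow, derivation_ofNat])
  exact ⟨r, s, t, r₂, r₃, p, by linear_combination -hr, rfl, by linear_combination -ht⟩

lemma mem_killingProducts_of_transverse {k : Fin 4 → Fin 4 → R} (hsymm : ∀ a b, k a b = k b a)
    (hzero : ∀ i < 2, ∀ a, k i a = 0)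
    (hd : ∀ i j, 2 ≤ i → 2 ≤ j → ∀ a < 2, C.d a (k i j) = 0)
    (hcyc : ∀ i j l, 2 ≤ i → 2 ≤ j → 2 ≤ l →
      C.d l (k i j) + C.d i (k j l) + C.d j (k l i) = 0) :
    k ∈ C.connection.killingProducts := by
  have hzero' : ∀ i < 2, ∀ a, k a i = 0 := fun i hi a => by rw [hsymm, hzero i hi]
  have h222 := hcyc 2 2 2 le_rfl le_rfl le_rfl
  have h223 := hcyc 2 2 3 le_rfl le_rfl (by decide)
  have h233 := hcyc 2 3 3 le_rfl (by decide) (by decide)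
  have h333 := hcyc 3 3 3 (by decide) (by decide) (by decide)
  rw [hsymm 3 2] at h223 h233
  obtain ⟨r, s, t, r₂, r₃, p, hr, hs, ht⟩ := exists_transverse_coefficients
    (eq_zero_of_ofNat_mul_eq_zero 𝕜 3 (by linear_combination h222))
    (eq_zero_of_ofNat_mul_eq_zero 𝕜 3 (by linear_combination h333))
    (by linear_combination h223) (by linear_combination h233)
    (hd 2 2 le_rfl le_rfl) (hd 2 3 le_rfl (by decide)) (hd 3 3 (by decide) (by decide))
  have h₂ := isKillingForm_translation (C := C) (i := 2) (by decide)
  have h₃ := isKillingForm_translation (C := C) (i := 3) (by decide)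
  have hρ := isKillingForm_rotation (C := C)
  have hmem := fun {α β : Fin 4 → R} (hα : C.IsKillingForm α) (hβ : C.IsKillingForm β) (r : 𝕜) =>
    Submodule.smul_mem _ r (FrameConnection.symmProd_mem_killingProducts hα hβ)
  suffices (2 : 𝕜) • k = r • symmProd (Pi.single 2 1) (Pi.single 2 1)
      + (2 * s) • symmProd (Pi.single 2 1) (Pi.single 3 1)
      + t • symmProd (Pi.single 3 1) (Pi.single 3 1)
      + (2 * r₂) • symmProd C.rotation (Pi.single 2 1)
      + (-2 * r₃) • symmProd C.rotation (Pi.single 3 1)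
      + (-p) • symmProd C.rotation C.rotation by
    rw [← inv_smul_smul₀ (two_ne_zero (α := 𝕜)) k, this]
    exact Submodule.smul_mem _ _ (add_mem (add_mem (add_mem (add_mem (add_mem (hmem h₂ h₂ _)
      (hmem h₂ h₃ _)) (hmem h₃ h₃ _)) (hmem hρ h₂ _)) (hmem hρ h₃ _)) (hmem hρ hρ _))
  funext a b
  fin_cases a <;> fin_cases b <;>
    simp [symmProd, rotation, hzero, hzero', hsymm 3 2, hr, hs, ht, Algebra.smul_def, map_ofNat] <;>
    ring

lemma IsKillingTwoTensor.mem_killingProducts_of_apply_zero_eq_zero {k : Fin 4 → Fin 4 → R}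
    (hk : C.IsKillingTwoTensor k) (hprofile : C.profile k = 0) (hzero : k 0 = 0) :
    k ∈ C.connection.killingProducts := by
  have h0 : ∀ a, k 0 a = 0 := congrFun hzero
  have hshear : ∀ i, C.shear k i = 0 := fun i => by simp [shear, h0]
  have hstress : ∀ i j, C.stress k i j = 4 * k i j := fun i j => by simp [stress, h0, hshear]
  have h11 : k 1 1 = 0 := by
    have h := hk.energy_eq_zero
    simp only [energy, h0, hprofile, map_zero, mul_zero, sub_zero, add_zero] at h
    exact C.eq_zero_of_x_mul_eq_zero (C.eq_zero_of_x_mul_eq_zero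
      (eq_zero_of_ofNat_mul_eq_zero 𝕜 8 (by linear_combination h)))
  have h1 : ∀ i, 2 ≤ i → k 1 i = 0 := fun i hi => by
    have h := hk.flux_eq_zero hi
    simp only [flux, h0, hshear, hprofile, map_zero, mul_zero, sub_zero, add_zero] at h
    exact C.eq_zero_of_x_mul_eq_zero
      (eq_zero_of_ofNat_mul_eq_zero 𝕜 4 (by linear_combination h))
  have hd : ∀ i j, 2 ≤ i → 2 ≤ j → ∀ a < 2, C.d a (k i j) = 0 := fun i j hi hj a ha => by
    refine eq_zero_of_ofNat_mul_eq_zero 𝕜 4 ?_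
    have hcases : a = 0 ∨ a = 1 := by revert ha; revert a; decide
    rcases hcases with rfl | rfl
    · simpa [hstress, Derivation.leibniz, derivation_ofNat] using hk.d_zero_stress hi hj
    · simpa [hstress, hprofile, Derivation.leibniz, derivation_ofNat] using
        (hk.one_coeffs hi hj).2.1
  have hrow : ∀ i < 2, ∀ a, k i a = 0 := by
    have hcases : ∀ a : Fin 4, a = 0 ∨ a = 1 ∨ 2 ≤ a := by decide
    intro i hi a
    rcases (by revert hi; revert i; decide : i = 0 ∨ i = 1) with rfl | rfl
    · exact h0 a
    rcases hcases a with rfl | rfl | ha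
    exacts [(hk.symm 1 0).trans (h0 1), h11, h1 a ha]
  refine mem_killingProducts_of_transverse hk.symm hrow hd fun i j l hi hj hl => ?_
  refine eq_zero_of_ofNat_mul_eq_zero 𝕜 4 ?_
  simpa [hstress, hshear, Derivation.leibniz, derivation_ofNat, mul_add] using
    (hk.transverse_coeffs hi hj hl).2.1

omit [CharZero 𝕜] in
lemma IsKillingTwoTensor.sub {k l : Fin 4 → Fin 4 → R} (hk : C.IsKillingTwoTensor k)
    (hl : C.IsKillingTwoTensor l) : C.IsKillingTwoTensor (k - l) :=
  C.connection.killingTensors.sub_mem hk hl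

lemma profile_sub_of_mem_killingProducts {k p : Fin 4 → Fin 4 → R}
    (hp : p ∈ C.connection.killingProducts) : C.profile (k - p) = C.profile k := by
  rw [map_sub, profile_eq_zero_of_mem_killingProducts hp, sub_zero]

lemma IsKillingTwoTensor.mem_killingProducts_of_apply_zero_zero_eq_zero {k : Fin 4 → Fin 4 → R}
    (hk : C.IsKillingTwoTensor k) (hprofile : C.profile k = 0) (h00 : k 0 0 = 0) :
    k ∈ C.connection.killingProducts := by
  have h01 : k 0 1 = 0 := by
    rw [profile_apply, h00, map_zero, mul_zero, add_zero] at hprofile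
    exact C.eq_zero_of_x_mul_eq_zero
      (eq_zero_of_ofNat_mul_eq_zero 𝕜 4 (by linear_combination hprofile))
  have hshear : C.shear k = 2 * k 0 := by
    funext i
    simp [shear, h00]
  have htwo : ∀ {f : R}, 2 * f = 0 → f = 0 := eq_zero_of_ofNat_mul_eq_zero 𝕜 2
  have hcases : ∀ i : Fin 4, i = 0 ∨ i = 1 ∨ 2 ≤ i := by decide
  obtain ⟨p, hp, hp₀⟩ := exists_mem_killingProducts_apply_zero_eq (C := C) (w := k 0)
    (fun i => by
      rcases hcases i with rfl | rfl | hi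
      · simp [h00]
      · simp [h01]
      · exact htwo (by
          simpa [hshear, Derivation.leibniz, derivation_ofNat] using hk.d_zero_shear hi))
    h00 h01
    (fun i j hi hj => htwo (htwo (by
      have h := (hk.one_coeffs hi hj).2.2.1
      simp only [h00, map_zero, mul_zero, hshear, Pi.mul_apply, Pi.ofNat_apply, Derivation.leibniz,
        smul_eq_mul, derivation_ofNat, add_zero, map_add, zero_add] at h
      simp only [map_add]
      linear_combination h)))
    (fun i => by
      rcases hcases i with rfl | rfl | hi
      · simp [h00]
      · simp [h01]
      · exact htwo (by
          simpa [hshear, Derivation.leibniz, derivation_ofNat] using (hk.one_one_coeffs hi).2.1))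
    (fun i j l hi hj hl => htwo (htwo (by
      have h := (hk.transverse_coeffs hi hj hl).2.2.1
      simp only [h00, map_zero, mul_zero, add_zero, hshear, Pi.mul_apply, Pi.ofNat_apply,
        Derivation.leibniz, smul_eq_mul, derivation_ofNat, zero_add] at h
      linear_combination h)))
  have hsub := hk.sub (C.connection.killingProducts_le hp)
  have hkp := hsub.mem_killingProducts_of_apply_zero_eq_zero
    (by rw [profile_sub_of_mem_killingProducts hp, hprofile]) (by rw [Pi.sub_apply, hp₀, sub_self])
  exact sub_add_cancel k p ▸ add_mem hkp hp

theorem IsKillingTwoTensor.mem_killingProducts_iff {k : Fin 4 → Fin 4 → R}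
    (hk : C.IsKillingTwoTensor k) : k ∈ C.connection.killingProducts ↔ C.profile k = 0 := by
  refine ⟨profile_eq_zero_of_mem_killingProducts, fun hprofile => ?_⟩
  obtain ⟨p, hp, hp₀⟩ := exists_mem_killingProducts_apply_zero_zero_eq hk.d_zero_apply_zero_zero
    hk.d_d_d_apply_zero_zero
  have hsub := hk.sub (C.connection.killingProducts_le hp)
  have hkp := hsub.mem_killingProducts_of_apply_zero_zero_eq_zero
    (by rw [profile_sub_of_mem_killingProducts hp, hprofile])
    (by rw [Pi.sub_apply, Pi.sub_apply, hp₀, sub_self])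
  exact sub_add_cancel k p ▸ add_mem hkp hp

/-- The functions `x 1, x 2, x 3, x 2 ^ 2, x 2 * x 3, x 3 ^ 2`, a basis modulo constants of the
possible profiles of Killing tensors. -/
def profileBasis (C : HalfSpaceChart 𝕜 R) : Fin 6 → R :=
  ![C.x 1, C.x 2, C.x 3, C.x 2 ^ 2, C.x 2 * C.x 3, C.x 3 ^ 2]

omit [CharZero 𝕜] in
lemma isKillingTwoTensor_profileTensor_profileBasis (i : Fin 6) :
    C.IsKillingTwoTensor (C.profileTensor (C.profileBasis i)) := by
  refine isKillingTwoTensor_profileTensor ?_ (fun a => ?_) fun a b c => ?_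
  · fin_cases i <;> simp [profileBasis, C.d_x, Derivation.leibniz, Derivation.leibniz_pow]
  · fin_cases i <;> fin_cases a <;>
      simp [profileBasis, C.d_x, Derivation.leibniz, Derivation.leibniz_pow, derivation_ofNat]
  · fin_cases i <;> fin_cases c <;> simp only [profileBasis, Derivation.leibniz,
      Derivation.leibniz_pow, C.d_x, Fin.reduceFinMk, Matrix.cons_val] <;> fin_cases b <;>
      simp [C.d_x, derivation_ofNat, Derivation.leibniz]

lemma exists_profile_eq_algebraMap {k : Fin 4 → Fin 4 → R}
    (hk : k ∈ C.connection.reducibleTensors C.metric) :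
    ∃ r : 𝕜, C.profile k = algebraMap 𝕜 R r := by
  obtain ⟨g, hg, p, hp, rfl⟩ := Submodule.mem_sup.1 hk
  obtain ⟨r, rfl⟩ := Submodule.mem_span_singleton.1 hg
  refine ⟨r * -4, ?_⟩
  rw [map_add, profile_eq_zero_of_mem_killingProducts hp, add_zero, map_smul,
    ← neg_eq_iff_eq_neg.2 C.profileTensor_one, map_neg, profile_profileTensor, mul_one,
    Algebra.smul_def, map_mul, map_neg, map_ofNat]

theorem eq_zero_of_sum_smul_profileTensor_mem [Nontrivial R] {c : Fin 6 → 𝕜}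
    (h : ∑ i, c i • C.profileTensor (C.profileBasis i) ∈
      C.connection.reducibleTensors C.metric) : c = 0 := by
  obtain ⟨r, hr⟩ := exists_profile_eq_algebraMap h
  have hsum : ∑ i, 4 * (algebraMap 𝕜 R (c i) * C.profileBasis i) = algebraMap 𝕜 R r := by
    simp only [← hr, map_sum, map_smul, profile_profileTensor]
    simp only [Algebra.smul_def, mul_left_comm]
  simp only [Fin.sum_univ_six, profileBasis, Matrix.cons_val] at hsum
  have hinj : ∀ {s : 𝕜}, algebraMap 𝕜 R s = 0 → s = 0 := (map_eq_zero _).1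
  have hd : ∀ a, C.d a _ = 0 := fun a =>
    (congrArg (C.d a) hsum).trans (Derivation.map_algebraMap _ _)
  have hdd : ∀ a b, C.d a (C.d b _) = 0 := fun a b =>
    (congrArg (C.d a) (hd b)).trans (map_zero _)
  have h₁ := hd 1
  have h₂ := hd 2
  have h₃ := hd 3
  have h₂₂ := hdd 2 2
  have h₂₃ := hdd 2 3
  have h₃₃ := hdd 3 3
  simp only [map_add, Derivation.leibniz, Derivation.leibniz_pow, C.d_x, derivation_ofNat,
    Derivation.map_algebraMap, Fin.reduceEq, if_true, if_false, smul_zero, add_zero, zero_add,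
    smul_eq_mul, nsmul_eq_mul, mul_one, mul_zero, Nat.add_one_sub_one, pow_one,
    Nat.cast_ofNat] at h₁ h₂ h₃ h₂₂ h₂₃ h₃₃
  have h3 : c 3 = 0 := hinj (eq_zero_of_ofNat_mul_eq_zero 𝕜 8 (by linear_combination h₂₂))
  have h4 : c 4 = 0 := hinj (eq_zero_of_ofNat_mul_eq_zero 𝕜 4 (by linear_combination h₂₃))
  have h5 : c 5 = 0 := hinj (eq_zero_of_ofNat_mul_eq_zero 𝕜 8 (by linear_combination h₃₃))
  simp only [h3, h4, h5, map_zero, zero_mul, mul_zero, add_zero] at h₂ h₃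
  funext i
  fin_cases i
  exacts [hinj (eq_zero_of_ofNat_mul_eq_zero 𝕜 4 h₁), hinj (eq_zero_of_ofNat_mul_eq_zero 𝕜 4 h₂),
    hinj (eq_zero_of_ofNat_mul_eq_zero 𝕜 4 h₃), h3, h4, h5]

lemma profileTensor_mem {f : R} (h₀ : C.d 0 f = 0) (h₁ : ∀ a, C.d 1 (C.d a f) = 0)
    (h₃ : ∀ a b c, C.d a (C.d b (C.d c f)) = 0) :
    C.profileTensor f ∈ Submodule.span 𝕜 (Set.range fun i => C.profileTensor (C.profileBasis i)) ⊔
      C.connection.reducibleTensors C.metric := by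
  have hcases : ∀ i : Fin 4, i = 0 ∨ i = 1 ∨ i = 2 ∨ i = 3 := by decide
  set N := Submodule.span 𝕜 (Set.range fun i => C.profileTensor (C.profileBasis i)) ⊔
    C.connection.reducibleTensors C.metric
  have hbasis : ∀ i, C.profileTensor (C.profileBasis i) ∈ N := fun i =>
    Submodule.mem_sup_left (Submodule.subset_span ⟨i, rfl⟩)
  have hone : C.profileTensor 1 ∈ N := by
    rw [profileTensor_one]
    exact neg_mem (Submodule.mem_sup_right (Submodule.mem_sup_left
      (Submodule.mem_span_singleton_self _)))
  refine mem_of_d_d_d_eq_zero (M := N.comap C.profileTensor) h₀ h₃ (fun a => ?_) fun a b => ?_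
  · fin_cases a
    exacts [hone, hbasis 0, hbasis 1, hbasis 2]
  rcases hcases b with rfl | rfl | hb
  · exact .inl (by rw [h₀, map_zero])
  · exact .inl (by rw [C.d_comm, h₁])
  rcases hcases a with rfl | rfl | ha
  · exact .inl (C.d_zero_d_eq_zero h₀ b)
  · exact .inl (h₁ b)
  refine .inr (?_ : C.profileTensor (C.x a * C.x b) ∈ N)
  rcases ha with rfl | rfl <;> rcases hb with rfl | rfl
  exacts [pow_two (C.x 2) ▸ hbasis 3, hbasis 4, mul_comm (C.x 2) _ ▸ hbasis 4,
    pow_two (C.x 3) ▸ hbasis 5]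

theorem IsKillingTwoTensor.exists_sub_sum_mem {k : Fin 4 → Fin 4 → R}
    (hk : C.IsKillingTwoTensor k) :
    ∃ c : Fin 6 → 𝕜, k - ∑ i, c i • C.profileTensor (C.profileBasis i) ∈
      C.connection.reducibleTensors C.metric := by
  have hprofile := profileTensor_mem hk.d_zero_profile hk.d_one_d_profile hk.d_d_d_profile
  have hk' := isKillingTwoTensor_profileTensor hk.d_zero_profile hk.d_one_d_profile hk.d_d_d_profile
  have hdiff : k - (4 : 𝕜)⁻¹ • C.profileTensor (C.profile k) ∈ C.connection.killingProducts := by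
    refine (hk.sub (?_ : C.IsKillingTwoTensor _)).mem_killingProducts_iff.2 ?_
    · exact C.connection.killingTensors.smul_mem 4⁻¹ hk'
    · rw [map_sub, map_smul, profile_profileTensor, inv_ofNat_smul_ofNat_mul, sub_self]
  have hkmem := add_mem (Submodule.mem_sup_right (Submodule.mem_sup_right hdiff))
    (Submodule.smul_mem _ (4 : 𝕜)⁻¹ hprofile)
  rw [sub_add_cancel] at hkmem
  obtain ⟨s, hs, r, hr, rfl⟩ := Submodule.mem_sup.1 hkmem
  obtain ⟨c, rfl⟩ := (Submodule.mem_span_range_iff_exists_fun 𝕜).1 hs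
  exact ⟨c, by rwa [add_sub_cancel_left]⟩

theorem isBasisModReducible_profileBasis [Nontrivial R] :
    C.connection.IsBasisModReducible C.metric fun i => C.profileTensor (C.profileBasis i) where
  isKillingTwoTensor := isKillingTwoTensor_profileTensor_profileBasis
  eq_zero_of_sum_smul_mem _ := eq_zero_of_sum_smul_profileTensor_mem
  exists_sub_sum_smul_mem _ := IsKillingTwoTensor.exists_sub_sum_mem

end Reduction

end HalfSpaceChart

end Conformal

section DualFrame

open scoped Matrix

variable {𝕜 R ι : Type*} [CommRing 𝕜] [CommRing R] [Algebra 𝕜 R] [Fintype ι]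

/-- The derivations `∑ i, E a i • D i`; they are the coordinate derivations of functions `x c`
when `E` is the inverse of the Jacobian matrix `D i (x c)`. -/
def combineDerivations (D : ι → Derivation 𝕜 R R) (E : Matrix ι ι R) (a : ι) : Derivation 𝕜 R R :=
  ∑ i, E a i • D i

variable {D : ι → Derivation 𝕜 R R} {E : Matrix ι ι R}

lemma combineDerivations_apply (a : ι) (f : R) :
    combineDerivations D E a f = E a ⬝ᵥ fun i => D i f := by
  rw [combineDerivations, ← Derivation.coeFnAddMonoidHom_apply, map_sum, Finset.sum_apply]
  rfl

lemma combineDerivations_comp_sub (hD : ∀ i j f, D i (D j f) = D j (D i f)) (a b : ι) (f : R) :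
    combineDerivations D E a (combineDerivations D E b f) -
        combineDerivations D E b (combineDerivations D E a f) =
      ((fun j => combineDerivations D E a (E b j)) - fun j => combineDerivations D E b (E a j)) ⬝ᵥ
        fun j => D j f := by
  have hsecond : (E b ⬝ᵥ fun j => E a ⬝ᵥ fun i => D i (D j f)) =
      E a ⬝ᵥ fun j => E b ⬝ᵥ fun i => D i (D j f) :=
    dotProduct_dotProduct_comm_of_symm (fun i j => hD j i f) _ _
  have hexpand (a b : ι) : combineDerivations D E a (combineDerivations D E b f) =
      (fun j => combineDerivations D E a (E b j)) ⬝ᵥ (fun j => D j f) +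
        E b ⬝ᵥ fun j => E a ⬝ᵥ fun i => D i (D j f) := by
    rw [combineDerivations_apply b, derivation_dotProduct]
    simp only [combineDerivations_apply]
  rw [hexpand, hexpand, hsecond, sub_dotProduct, add_sub_add_right_eq_sub]

variable [DecidableEq ι] {x : ι → R} (hE : E * Matrix.of (fun i c => D i (x c)) = 1)
include hE

lemma combineDerivations_apply_coordinate (a c : ι) :
    combineDerivations D E a (x c) = if a = c then 1 else 0 := by
  rw [combineDerivations_apply, ← Matrix.one_apply, ← hE]
  rfl

-- The commutator is a combination of the `D j` which kills every `x c`, hence vanishes.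
lemma combineDerivations_comm (hD : ∀ i j f, D i (D j f) = D j (D i f)) (a b : ι) (f : R) :
    combineDerivations D E a (combineDerivations D E b f) =
      combineDerivations D E b (combineDerivations D E a f) := by
  have hconst (a b c : ι) : combineDerivations D E a (combineDerivations D E b (x c)) = 0 := by
    rw [combineDerivations_apply_coordinate hE, apply_ite (combineDerivations D E a), map_zero,
      Derivation.map_one_eq_zero, ite_self]
  set v := (fun j => combineDerivations D E a (E b j)) - fun j => combineDerivations D E b (E a j)
  have hv : v ᵥ* Matrix.of (fun i c => D i (x c)) = 0 := funext fun c =>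
    (combineDerivations_comp_sub hD a b (x c)).symm.trans (by rw [hconst, hconst, sub_zero]; rfl)
  have hv₀ : v = 0 := by
    calc v = v ᵥ* (Matrix.of (fun i c => D i (x c)) * E) := by
          rw [mul_eq_one_comm.1 hE, Matrix.vecMul_one]
      _ = 0 := by rw [← Matrix.vecMul_vecMul, hv, Matrix.zero_vecMul]
  refine sub_eq_zero.1 ((combineDerivations_comp_sub hD a b f).trans ?_)
  exact (congrArg (· ⬝ᵥ _) hv₀).trans (zero_dotProduct _)

lemma eq_zero_of_combineDerivations_eq_zero {f : R} (hf : ∀ a, combineDerivations D E a f = 0)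
    (i : ι) : D i f = 0 := by
  have h : E *ᵥ (fun i => D i f) = 0 := funext fun a =>
    (combineDerivations_apply a f).symm.trans (hf a)
  have hzero : (fun i => D i f) = 0 := by
    rw [← Matrix.one_mulVec fun i => D i f, ← mul_eq_one_comm.1 hE, ← Matrix.mulVec_mulVec, h,
      Matrix.mulVec_zero]
  exact congrFun hzero i

end DualFrame

section PPWave

variable {𝕜 R : Type*} [CommRing 𝕜] [CommRing R] [Algebra 𝕜 R]

/-- The Christoffel symbols of the pp-wave with profile function `h`, for coordinate
derivatives `D`. -/
def christoffel (D : Fin 4 → Derivation 𝕜 R R) (h : R) (d a b : Fin 4) : R :=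
  if d = 1 ∧ a = 0 ∧ b = 0 then D 0 h
  else if (d = 2 ∧ a = 0 ∧ b = 0) ∨ (d = 1 ∧ ((a = 0 ∧ b = 2) ∨ (a = 2 ∧ b = 0))) then D 2 h
  else if (d = 3 ∧ a = 0 ∧ b = 0) ∨ (d = 1 ∧ ((a = 0 ∧ b = 3) ∨ (a = 3 ∧ b = 0))) then D 3 h
  else 0

/-- The Levi-Civita connection of the pp-wave with profile function `h`, in the coordinate
frame. -/
def ppConnection (D : Fin 4 → Derivation 𝕜 R R) (h : R) : FrameConnection 𝕜 R (Fin 4) where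
  deriv := D
  coeff a b d := christoffel D h d a b + christoffel D h d b a

/-- The metric of the pp-wave with profile function `h`. -/
def ppMetricComponents (h : R) : Fin 4 → Fin 4 → R :=
  !![-2 * h, -1, 0, 0; -1, 0, 0, 0; 0, 0, 1, 0; 0, 0, 0, 1]

lemma sum_ppConnection_coeff (D : Fin 4 → Derivation 𝕜 R R) (h : R) (X Y : Fin 4 → R)
    (j : Fin 4) : ∑ i, ∑ l, X i * Y l * (ppConnection D h).coeff i l j =
      2 * (![0, X 0 * Y 0 * D 0 h + (X 0 * Y 2 + X 2 * Y 0) * D 2 h +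
          (X 0 * Y 3 + X 3 * Y 0) * D 3 h, X 0 * Y 0 * D 2 h, X 0 * Y 0 * D 3 h] j) := by
  fin_cases j <;> simp only [ppConnection, christoffel, Fin.sum_univ_four, Fin.zero_eta,
    Fin.mk_one, Fin.reduceFinMk, Fin.isValue, Matrix.cons_val, Fin.reduceEq, and_true, true_and,
    and_false, false_and, or_false, false_or, ↓reduceIte] <;> ring

end PPWave

namespace HalfSpaceChart

section Flatten

variable {𝕜 R : Type*} [Field 𝕜] [CharZero 𝕜] [CommRing R] [Algebra 𝕜 R]
  (C : HalfSpaceChart 𝕜 R) {s : R} (hs : s ^ 4 = C.xInv)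

local notation "u" => C.x 0
local notation "v" => C.x 1
local notation "y" => C.x 2
local notation "z" => C.x 3

variable (s) in
/-- The profile function `(3/32) u⁻² (y² + z²)` of the plane wave, where `s` is `u ^ (-1/4)`. -/
def waveProfile : R := (3 / 32 : 𝕜) • (s ^ 8 * (y ^ 2 + z ^ 2))

variable (s) in
/-- Coordinates in which the metric of the plane wave is `x⁰` times the Minkowski metric,
where `s` is `u ^ (-1/4)`. -/
def flatCoordinate : Fin 4 → R :=
  ![u * s ^ 2, 2 * v - (1 / 4 : 𝕜) • (s ^ 4 * (y ^ 2 + z ^ 2)), s * y, s * z]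

variable (s) in
/-- The components of the vector fields `(1 / x⁰) ∂/∂xᵃ` of the coordinates `flatCoordinate`. -/
def flatFrame : Matrix (Fin 4) (Fin 4) R :=
  !![2, -(1 / 8 : 𝕜) • (s ^ 8 * (y ^ 2 + z ^ 2)), (1 / 2 : 𝕜) • (s ^ 4 * y),
      (1 / 2 : 𝕜) • (s ^ 4 * z);
    0, (1 / 2 : 𝕜) • s ^ 2, 0, 0;
    0, (1 / 4 : 𝕜) • (s ^ 5 * y), s, 0;
    0, (1 / 4 : 𝕜) • (s ^ 5 * z), 0, s]

variable {C}

include hs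

omit [CharZero 𝕜] in
lemma root_pow_mul : s ^ 4 * u = 1 := by rw [hs, mul_comm, C.x_mul_xInv]

lemma d_root (i : Fin 4) : C.d i s = if i = 0 then (-(1 / 4) : 𝕜) • s ^ 5 else 0 := by
  have hsu := root_pow_mul hs
  have h := congrArg (C.d i) hsu
  simp only [Derivation.leibniz, Derivation.leibniz_pow, C.d_x, smul_eq_mul,
    Derivation.map_one_eq_zero, nsmul_eq_mul, Nat.cast_ofNat, Nat.add_one_sub_one] at h
  split_ifs at h ⊢
  · linear_combination (norm := algebra) (1 / 4 : 𝕜) • (s * h) - C.d i s * hsu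
  · linear_combination (norm := algebra) (1 / 4 : 𝕜) • (s * h) - C.d i s * hsu

lemma d_flatCoordinate (i c : Fin 4) : C.d i (C.flatCoordinate s c) =
    !![(1 / 2 : 𝕜) • s ^ 2, (1 / 4 : 𝕜) • (s ^ 8 * (y ^ 2 + z ^ 2)), -(1 / 4 : 𝕜) • (s ^ 5 * y),
        -(1 / 4 : 𝕜) • (s ^ 5 * z);
      0, 2, 0, 0;
      0, -(1 / 2 : 𝕜) • (s ^ 4 * y), s, 0;
      0, -(1 / 2 : 𝕜) • (s ^ 4 * z), 0, s] i c := by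
  fin_cases c <;> fin_cases i <;>
    simp only [flatCoordinate, Fin.zero_eta, Fin.mk_one, Fin.reduceFinMk, Fin.isValue,
      Matrix.of_apply, Matrix.cons_val', Matrix.cons_val, Matrix.cons_val_fin_one, map_sub,
      map_add, Derivation.map_smul, Derivation.leibniz, Derivation.leibniz_pow, derivation_ofNat,
      C.d_x, d_root hs, smul_eq_mul, nsmul_eq_mul, Nat.cast_ofNat, Nat.add_one_sub_one,
      Fin.reduceEq, ↓reduceIte] <;>
    first
    | algebra
    | linear_combination (norm := algebra) (-(1 / 2) : 𝕜) • (s ^ 2 * root_pow_mul hs)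

lemma flatFrame_mul_jacobian :
    C.flatFrame s * Matrix.of (fun i c => C.d i (C.flatCoordinate s c)) = s ^ 2 • 1 := by
  simp only [d_flatCoordinate hs]
  ext1 i c
  fin_cases c <;> fin_cases i <;>
    simp only [flatFrame, Matrix.mul_apply, Fin.sum_univ_four, Fin.zero_eta, Fin.mk_one,
      Fin.reduceFinMk, Fin.isValue, Matrix.of_apply, Matrix.cons_val', Matrix.cons_val,
      Matrix.cons_val_fin_one, Matrix.smul_apply, Matrix.one_apply, Fin.reduceEq, ↓reduceIte,
      smul_eq_mul] <;>
    algebra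

lemma smul_flatFrame_mul_jacobian :
    ((u * s ^ 2) • C.flatFrame s) * Matrix.of (fun i c => C.d i (C.flatCoordinate s c)) = 1 := by
  have h : u * s ^ 2 * s ^ 2 = 1 := by linear_combination root_pow_mul hs
  rw [Matrix.smul_mul, flatFrame_mul_jacobian hs, smul_smul, h, one_smul]

lemma isUnit_flatFrame : IsUnit (C.flatFrame s) :=
  IsUnit.of_mul_eq_one
    ((u * s ^ 2) • Matrix.of fun i c => C.d i (C.flatCoordinate s c)) <| by
    rw [Matrix.mul_smul, ← Matrix.smul_mul, smul_flatFrame_mul_jacobian hs]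

/-- The half space with the coordinates `flatCoordinate`. -/
def flatten : HalfSpaceChart 𝕜 R where
  d := combineDerivations C.d ((u * s ^ 2) • C.flatFrame s)
  x := C.flatCoordinate s
  xInv := s ^ 2
  d_x := combineDerivations_apply_coordinate (smul_flatFrame_mul_jacobian hs)
  d_comm := combineDerivations_comm (smul_flatFrame_mul_jacobian hs) C.d_comm
  x_mul_xInv := by
    change u * s ^ 2 * s ^ 2 = 1
    linear_combination root_pow_mul hs
  exists_algebraMap_eq f hf := C.exists_algebraMap_eq f
    (eq_zero_of_combineDerivations_eq_zero (smul_flatFrame_mul_jacobian hs) hf)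

lemma flatten_connection_deriv (a : Fin 4) (f : R) :
    (flatten hs).connection.deriv a f = ∑ i, C.flatFrame s a i * C.d i f := by
  change s ^ 2 * combineDerivations _ _ a f = _
  rw [combineDerivations_apply]
  simp only [dotProduct, Finset.mul_sum, Matrix.smul_apply, smul_eq_mul]
  exact Finset.sum_congr rfl fun i _ => by
    linear_combination (C.flatFrame s a i * C.d i f) * root_pow_mul hs

lemma flatten_connection_deriv_root (a : Fin 4) :
    (flatten hs).connection.deriv a s = if a = 0 then (-(1 / 2) : 𝕜) • s ^ 5 else 0 := by
  rw [flatten_connection_deriv]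
  fin_cases a <;> simp only [flatFrame, Fin.zero_eta, Fin.mk_one, Fin.reduceFinMk, Fin.isValue,
    Matrix.of_apply, Matrix.cons_val', Matrix.cons_val, Matrix.cons_val_fin_one, d_root hs,
    Fin.sum_univ_four, Fin.reduceEq, ↓reduceIte] <;> algebra

lemma flatten_connection_deriv_x (a i : Fin 4) :
    (flatten hs).connection.deriv a (C.x i) = C.flatFrame s a i := by
  simp [flatten_connection_deriv, C.d_x]

lemma d_waveProfile (i : Fin 4) : C.d i (C.waveProfile s) =
    (3 / 16 : 𝕜) • (s ^ 8 * ![-(s ^ 4 * (y ^ 2 + z ^ 2)), 0, y, z] i) := by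
  fin_cases i <;>
    simp only [waveProfile, Fin.zero_eta, Fin.mk_one, Fin.reduceFinMk, Fin.isValue,
      Matrix.cons_val, C.d_x, d_root hs, map_add, Derivation.map_smul, Derivation.leibniz,
      Derivation.leibniz_pow, smul_eq_mul, nsmul_eq_mul, Nat.cast_ofNat, Nat.add_one_sub_one,
      Fin.reduceEq, ↓reduceIte] <;>
    algebra

lemma flatten_connection_deriv_flatFrame (a b j : Fin 4) :
    (flatten hs).connection.deriv a (C.flatFrame s b j) =
      ![!![0, (3 / 8 : 𝕜) • (s ^ 12 * (y ^ 2 + z ^ 2)), -(3 / 4 : 𝕜) • (s ^ 8 * y),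
            -(3 / 4 : 𝕜) • (s ^ 8 * z);
          0, -(1 / 2 : 𝕜) • s ^ 6, 0, 0;
          0, -(1 / 2 : 𝕜) • (s ^ 9 * y), -(1 / 2 : 𝕜) • s ^ 5, 0;
          0, -(1 / 2 : 𝕜) • (s ^ 9 * z), 0, -(1 / 2 : 𝕜) • s ^ 5],
        0,
        !![0, -(1 / 4 : 𝕜) • (s ^ 9 * y), (1 / 2 : 𝕜) • s ^ 5, 0;
          0, 0, 0, 0;
          0, (1 / 4 : 𝕜) • s ^ 6, 0, 0;
          0, 0, 0, 0],
        !![0, -(1 / 4 : 𝕜) • (s ^ 9 * z), 0, (1 / 2 : 𝕜) • s ^ 5;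
          0, 0, 0, 0;
          0, 0, 0, 0;
          0, (1 / 4 : 𝕜) • s ^ 6, 0, 0]] a b j := by
  fin_cases b <;> fin_cases j <;>
    fin_cases a <;>
    simp only [flatFrame, Fin.zero_eta, Fin.mk_one, Fin.reduceFinMk, Fin.isValue, Matrix.of_apply,
      Matrix.cons_val', Matrix.cons_val, Matrix.cons_val_fin_one, flatten_connection_deriv_root,
      flatten_connection_deriv_x, map_add, map_zero, Matrix.zero_apply, Derivation.map_smul,
      Derivation.leibniz, Derivation.leibniz_pow, derivation_ofNat, smul_eq_mul, nsmul_eq_mul,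
      Nat.cast_ofNat, Nat.add_one_sub_one, Fin.reduceEq, ↓reduceIte] <;> algebra

lemma isFrameChange_flatFrame :
    (ppConnection C.d (C.waveProfile s)).IsFrameChange (flatten hs).connection (C.flatFrame s) where
  deriv := flatten_connection_deriv hs
  coeff a b j := by
    have hcoeff : ∑ c, (flatten hs).connection.coeff a b c * C.flatFrame s c j =
        s ^ 4 * lightConeMetric _ a b * C.flatFrame s 1 j := by
      simp only [connection, flatten, ← pow_mul, Nat.reduceMul, mul_ite, mul_one, mul_zero, ite_mul,
        zero_mul, Finset.sum_ite_eq', Finset.mem_univ, ↓reduceIte]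
    rw [sum_ppConnection_coeff, hcoeff]
    simp only [flatten_connection_deriv_flatFrame, d_waveProfile hs]
    fin_cases j <;> fin_cases a <;> fin_cases b <;>
      simp only [flatFrame, lightConeMetric, Fin.zero_eta, Fin.mk_one, Fin.reduceFinMk,
        Fin.isValue, Matrix.of_apply, Matrix.cons_val', Matrix.cons_val, Matrix.cons_val_fin_one,
        Matrix.zero_apply] <;> algebra

lemma changeFrame_flatFrame_ppMetricComponents :
    FrameConnection.changeFrame 𝕜 (C.flatFrame s) (ppMetricComponents (C.waveProfile s)) =
      (flatten hs).metric := by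
  funext a b
  rw [FrameConnection.changeFrame_apply]
  fin_cases a <;> fin_cases b <;>
    simp only [dotProduct, flatFrame, ppMetricComponents, waveProfile, Fin.sum_univ_four,
      lightConeMetric, flatten, HalfSpaceChart.metric, Fin.zero_eta, Fin.mk_one, Fin.reduceFinMk,
      Fin.isValue, Matrix.of_apply, Matrix.cons_val', Matrix.cons_val, Matrix.cons_val_fin_one,
      flatCoordinate] <;>
    algebra

theorem exists_isBasisModReducible [Nontrivial R] : ∃ b : Fin 6 → Fin 4 → Fin 4 → R,
    (ppConnection C.d (C.waveProfile s)).IsBasisModReducible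
      (ppMetricComponents (C.waveProfile s)) b := by
  have hunit := isUnit_flatFrame hs
  choose b hb using fun i => (FrameConnection.changeFrame_bijective (𝕜 := 𝕜) hunit).2
    ((flatten hs).profileTensor ((flatten hs).profileBasis i))
  refine ⟨b, (isFrameChange_flatFrame hs).isBasisModReducible hunit ?_⟩
  rw [changeFrame_flatFrame_ppMetricComponents, funext hb]
  exact isBasisModReducible_profileBasis

end Flatten
end HalfSpaceChart

section SmoothFunctions

open TopologicalSpace
open scoped ContDiff

variable {E : Type*} [NormedAddCommGroup E] [NormedSpace ℝ E]

/-- The algebra of smooth real functions on an open set; smoothness is expressed through the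
extension by zero. -/
def smoothFunctions (U : Opens E) : Subalgebra ℝ (U → ℝ) where
  carrier := {f | ContDiffOn ℝ ∞ (Function.extend Subtype.val f 0) U}
  mul_mem' hf hg := (hf.mul hg).congr fun p hp => by
    simp only [Subtype.val_injective.extend_apply _ _ (⟨p, hp⟩ : U), Pi.mul_apply]
  add_mem' hf hg := (hf.add hg).congr fun p hp => by
    simp only [Subtype.val_injective.extend_apply _ _ (⟨p, hp⟩ : U), Pi.add_apply]
  algebraMap_mem' r := (contDiffOn_const (c := r)).congr fun p hp =>
    Subtype.val_injective.extend_apply _ _ (⟨p, hp⟩ : U)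

namespace smoothFunctions

variable {U : Opens E}

/-- Extension of a smooth function by zero. -/
def extend (f : smoothFunctions U) : E → ℝ := Function.extend Subtype.val f.1 0

lemma extend_of_mem (f : smoothFunctions U) {p : E} (hp : p ∈ U) : extend f p = f.1 ⟨p, hp⟩ :=
  Subtype.val_injective.extend_apply _ _ (⟨p, hp⟩ : U)

lemma contDiffOn_extend (f : smoothFunctions U) : ContDiffOn ℝ ∞ (extend f) U := f.2

lemma differentiableAt_extend (f : smoothFunctions U) (p : U) :
    DifferentiableAt ℝ (extend f) p :=
  ((contDiffOn_extend f).differentiableOn (by simp)).differentiableAt (U.isOpen.mem_nhds p.2)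

/-- Restriction to `U` of a function which is smooth there. -/
def restrict (F : E → ℝ) (hF : ContDiffOn ℝ ∞ F U) : smoothFunctions U :=
  ⟨fun p => F p, hF.congr fun p hp => Subtype.val_injective.extend_apply _ _ (⟨p, hp⟩ : U)⟩

lemma contDiffOn_of_apply_eq {f : smoothFunctions U} {F : E → ℝ} (h : ∀ p : U, f.1 p = F p) :
    ContDiffOn ℝ ∞ F U :=
  (contDiffOn_extend f).congr fun p hp => ((extend_of_mem f hp).trans (h ⟨p, hp⟩)).symm

lemma ext {f g : smoothFunctions U} (h : ∀ p, f.1 p = g.1 p) : f = g := Subtype.ext (funext h)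

lemma fderiv_extend {f : smoothFunctions U} {F : E → ℝ} (h : ∀ p : U, f.1 p = F p) (p : U) :
    fderiv ℝ (extend f) p = fderiv ℝ F p := by
  refine Filter.EventuallyEq.fderiv_eq ?_
  filter_upwards [U.isOpen.mem_nhds p.2] with q hq
  rw [extend_of_mem f hq, h]

/-- Derivative of smooth functions in a fixed direction. -/
def dirDeriv (v : E) : Derivation ℝ (smoothFunctions U) (smoothFunctions U) :=
  Derivation.mk'
    { toFun f := restrict (fun p => fderiv ℝ (extend f) p v)
        (((contDiffOn_extend f).fderiv_of_isOpen U.isOpen (by simp)).clm_apply contDiffOn_const)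
      map_add' f g := ext fun p => by
        have hfg : ∀ q : U, (f + g).1 q = (extend f + extend g) q := fun q => by
          simp only [Pi.add_apply, extend_of_mem _ q.2]; rfl
        change fderiv ℝ (extend (f + g)) p v = fderiv ℝ (extend f) p v + fderiv ℝ (extend g) p v
        rw [fderiv_extend hfg, fderiv_add (differentiableAt_extend f p)
          (differentiableAt_extend g p), add_apply]
      map_smul' r f := ext fun p => by
        have hrf : ∀ q : U, (r • f).1 q = (r • extend f) q := fun q => by
          simp only [Pi.smul_apply, extend_of_mem _ q.2]; rfl
        change fderiv ℝ (extend (r • f)) p v = r • fderiv ℝ (extend f) p v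
        rw [fderiv_extend hrf, fderiv_const_smul (differentiableAt_extend f p),
          smul_apply] }
    fun f g => ext fun p => by
      have hfg : ∀ q : U, (f * g).1 q = (extend f * extend g) q := fun q => by
        simp only [Pi.mul_apply, extend_of_mem _ q.2]; rfl
      change fderiv ℝ (extend (f * g)) p v =
        f.1 p * fderiv ℝ (extend g) p v + g.1 p * fderiv ℝ (extend f) p v
      rw [fderiv_extend hfg, fderiv_mul (differentiableAt_extend f p)
        (differentiableAt_extend g p), extend_of_mem f p.2, extend_of_mem g p.2]
      rfl

lemma dirDeriv_apply {f : smoothFunctions U} {F : E → ℝ} (h : ∀ p : U, f.1 p = F p) (v : E)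
    (p : U) : (dirDeriv v f).1 p = fderiv ℝ F p v :=
  congrArg (· v) (fderiv_extend h p)

lemma dirDeriv_comm (v w : E) (f : smoothFunctions U) :
    dirDeriv v (dirDeriv w f) = dirDeriv w (dirDeriv v f) := by
  refine ext fun p => ?_
  have hsmooth : ContDiffAt ℝ ∞ (extend f) p :=
    (contDiffOn_extend f).contDiffAt (U.isOpen.mem_nhds p.2)
  have hdiff : DifferentiableAt ℝ (fderiv ℝ (extend f)) p :=
    (hsmooth.fderiv_right (m := 1) (by norm_cast)).differentiableAt one_ne_zero
  have hsecond (v w : E) : (dirDeriv v (dirDeriv w f)).1 p =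
      fderiv ℝ (fderiv ℝ (extend f)) p v w := by
    rw [dirDeriv_apply (F := fun q => fderiv ℝ (extend f) q w) (fun q => rfl),
      fderiv_clm_apply hdiff (differentiableAt_const w)]
    simp
  rw [hsecond, hsecond]
  refine hsmooth.isSymmSndFDerivAt ?_ v w
  rw [minSmoothness_of_isRCLikeNormedField]
  exact WithTop.coe_le_coe.2 (le_top (a := (2 : ℕ∞)))

lemma exists_algebraMap_eq (hU : IsPreconnected (U : Set E)) {f : smoothFunctions U}
    (hf : ∀ v, dirDeriv v f = 0) : ∃ c : ℝ, algebraMap ℝ (smoothFunctions U) c = f := by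
  obtain ⟨c, hc⟩ := U.isOpen.exists_is_const_of_fderiv_eq_zero hU
    ((contDiffOn_extend f).differentiableOn (by simp)) fun p hp =>
      ContinuousLinearMap.ext fun v => congrFun (congrArg Subtype.val (hf v)) ⟨p, hp⟩
  exact ⟨c, ext fun p => (hc p.1 p.2).symm.trans (extend_of_mem f p.2)⟩

end smoothFunctions

end SmoothFunctions

section PlaneWave

open TopologicalSpace
open scoped ContDiff

variable {U : Opens Pt}

/-- The partial derivatives, acting on smooth functions on an open set. -/
def partialDeriv (i : Fin 4) : Derivation ℝ (smoothFunctions U) (smoothFunctions U) :=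
  smoothFunctions.dirDeriv (Pi.single i 1)

lemma partialDeriv_apply {f : smoothFunctions U} {F : Pt → ℝ} (hF : ∀ p : U, f.1 p = F p)
    (i : Fin 4) (p : U) : (partialDeriv i f).1 p = pd i F p :=
  smoothFunctions.dirDeriv_apply hF _ p

/-- `ppConnection` for smooth functions on an open set and their partial derivatives. -/
abbrev coordinateConnection (h : smoothFunctions U) :
    FrameConnection ℝ (smoothFunctions U) (Fin 4) :=
  ppConnection partialDeriv h

variable {h : smoothFunctions U} {H : Pt → ℝ} (hH : ∀ p : U, h.1 p = H p)
include hH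

lemma christoffel_apply (d a b : Fin 4) (p : U) :
    (christoffel partialDeriv h d a b).1 p = Gamma H p d a b := by
  simp only [christoffel, Gamma, apply_ite (fun f : smoothFunctions U => f.1 p),
    partialDeriv_apply hH, ZeroMemClass.coe_zero, Pi.zero_apply]

lemma ppMetricComponents_apply (a b : Fin 4) (p : U) :
    (ppMetricComponents h a b).1 p = ppMetric H p a b := by
  have htwo : (2 : smoothFunctions U).1 p = 2 := rfl
  fin_cases a <;> fin_cases b <;> simp [ppMetricComponents, ppMetric, ← hH, htwo]

lemma coordinateConnection_coeff_dotProduct_apply (a b : Fin 4)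
    (α : Fin 4 → smoothFunctions U) (p : U) :
    ((coordinateConnection h).coeff a b ⬝ᵥ α).1 p =
      ∑ d, Gamma H p d a b * (α d).1 p + ∑ d, Gamma H p d b a * (α d).1 p := by
  rw [← Finset.sum_add_distrib]
  simp only [dotProduct, AddSubmonoidClass.coe_finsetSum, Finset.sum_apply, MulMemClass.coe_mul,
    Pi.mul_apply, ← christoffel_apply hH, ← add_mul]
  rfl

theorem isKillingVector_iff {X : Pt → Fin 4 → ℝ} {α : Fin 4 → smoothFunctions U}
    (hα : ∀ a (p : U), (α a).1 p = X p a) :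
    IsKillingVector H U X ↔ (coordinateConnection h).IsKillingForm α := by
  have hsmooth : ∀ a, ContDiffOn ℝ ∞ (fun p => X p a) U := fun a =>
    smoothFunctions.contDiffOn_of_apply_eq (hα a)
  have hderiv : ∀ a b (p : U), ((coordinateConnection h).deriv a (α b)).1 p =
      pd a (fun q => X q b) p := fun a b p => partialDeriv_apply (hα b) a p
  have hresidue : ∀ (p : U) a b, covD1 H X p a b + covD1 H X p b a =
      ((coordinateConnection h).deriv a (α b) + (coordinateConnection h).deriv b (α a)).1 p -
        ((coordinateConnection h).coeff a b ⬝ᵥ α).1 p := fun p a b => by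
    simp only [coordinateConnection_coeff_dotProduct_apply hH, AddMemClass.coe_add, Pi.add_apply,
      hderiv, hα, covD1]
    ring
  refine ⟨fun hX a b => smoothFunctions.ext fun p => ?_, fun h => ⟨hsmooth, fun p hp a b => ?_⟩⟩
  · exact sub_eq_zero.1 ((hresidue p a b).symm.trans (hX.2 p p.2 a b))
  · rw [hresidue ⟨p, hp⟩, h a b, sub_self]

theorem isKillingTensor_iff {K : Pt → Fin 4 → Fin 4 → ℝ} (hsymm : ∀ p a b, K p a b = K p b a)
    {k : Fin 4 → Fin 4 → smoothFunctions U} (hk : ∀ a b (p : U), (k a b).1 p = K p a b) :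
    IsKillingTensor H U K ↔ (coordinateConnection h).IsKillingTwoTensor k := by
  have hsmooth : ∀ a b, ContDiffOn ℝ ∞ (fun p => K p a b) U := fun a b =>
    smoothFunctions.contDiffOn_of_apply_eq (hk a b)
  have hderiv : ∀ c a b (p : U), ((coordinateConnection h).deriv c (k a b)).1 p =
      pd c (fun q => K q a b) p := fun c a b p => partialDeriv_apply (hk a b) c p
  have hresidue : ∀ (p : U) a b c, covD2 H K p c a b + covD2 H K p a b c + covD2 H K p b c a =
      ((coordinateConnection h).deriv c (k a b) + (coordinateConnection h).deriv a (k b c) +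
        (coordinateConnection h).deriv b (k c a)).1 p - ((coordinateConnection h).coeff a b ⬝ᵥ k c +
        (coordinateConnection h).coeff b c ⬝ᵥ k a +
        (coordinateConnection h).coeff c a ⬝ᵥ k b).1 p := fun p a b c => by
    simp only [coordinateConnection_coeff_dotProduct_apply hH, AddMemClass.coe_add, Pi.add_apply,
      hderiv, hk, covD2, hsymm p _ a, hsymm p _ b, hsymm p _ c]
    ring
  refine ⟨fun hK => ⟨fun a b => smoothFunctions.ext fun p => ?_,
    fun a b c => smoothFunctions.ext fun p => ?_⟩, fun h => ⟨hsmooth, hsymm, fun p hp a b c => ?_⟩⟩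
  · rw [hk, hk, hsymm]
  · exact sub_eq_zero.1 ((hresidue p a b c).symm.trans (hK.2.2 p p.2 a b c))
  · rw [hresidue ⟨p, hp⟩, h.cyclic a b c, sub_self]

lemma reducible_combination_apply {n : ℕ} (c₀ : ℝ) (c : Fin n → ℝ)
    (α β : Fin n → Fin 4 → smoothFunctions U) (a b : Fin 4) (p : U) :
    ((c₀ • ppMetricComponents h + ∑ i, c i • symmProd (α i) (β i)) a b).1 p =
      c₀ * ppMetric H p a b +
        ∑ i, c i * ((α i a).1 p * (β i b).1 p + (α i b).1 p * (β i a).1 p) := by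
  rw [← ppMetricComponents_apply hH]
  simp only [symmProd, Pi.add_apply, Finset.sum_apply, Pi.smul_apply, AddMemClass.coe_add,
    AddSubmonoidClass.coe_finsetSum, SetLike.val_smul, MulMemClass.coe_mul, Pi.mul_apply,
    smul_eq_mul]

theorem isReducible_iff {K : Pt → Fin 4 → Fin 4 → ℝ}
    {k : Fin 4 → Fin 4 → smoothFunctions U} (hk : ∀ a b (p : U), (k a b).1 p = K p a b) :
    IsReducible H U K ↔ k ∈ (coordinateConnection h).reducibleTensors (ppMetricComponents h) := by
  rw [FrameConnection.mem_reducibleTensors_iff]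
  constructor
  · rintro ⟨c₀, n, c, X, Y, hX, hY, hK⟩
    refine ⟨c₀, n, fun i => c i / 2,
      fun i a => smoothFunctions.restrict (fun p => X i p a) ((hX i).1 a),
      fun i a => smoothFunctions.restrict (fun p => Y i p a) ((hY i).1 a),
      fun i => (isKillingVector_iff hH fun _ _ => rfl).1 (hX i),
      fun i => (isKillingVector_iff hH fun _ _ => rfl).1 (hY i),
      funext₂ fun a b => smoothFunctions.ext fun p => ?_⟩
    rw [hk, hK p p.2, reducible_combination_apply hH]
    simp only [div_mul_eq_mul_div, mul_div_assoc]
    rfl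
  · rintro ⟨c₀, n, c, α, β, hα, hβ, rfl⟩
    have hextend : ∀ (γ : Fin 4 → smoothFunctions U) a (p : U),
        (γ a).1 p = smoothFunctions.extend (γ a) p :=
      fun γ a p => (smoothFunctions.extend_of_mem (γ a) p.2).symm
    refine ⟨c₀, n, fun i => 2 * c i, fun i p a => smoothFunctions.extend (α i a) p,
      fun i p a => smoothFunctions.extend (β i a) p,
      fun i => (isKillingVector_iff hH (hextend (α i))).2 (hα i),
      fun i => (isKillingVector_iff hH (hextend (β i))).2 (hβ i), fun p hp a b => ?_⟩
    rw [← hk a b ⟨p, hp⟩, reducible_combination_apply hH]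
    simp only [smoothFunctions.extend_of_mem _ hp]
    exact congrArg _ (Finset.sum_congr rfl fun i _ => by ring)

end PlaneWave

section HalfSpace

open TopologicalSpace

/-- The coordinate functions, as elements of the algebra of smooth functions on an open set. -/
def coordinate {U : Opens Pt} (i : Fin 4) : smoothFunctions U :=
  smoothFunctions.restrict (fun p => p i) (by fun_prop)

lemma partialDeriv_coordinate {U : Opens Pt} (i j : Fin 4) :
    partialDeriv i (coordinate j : smoothFunctions U) = if i = j then 1 else 0 := by
  refine smoothFunctions.ext fun p => ?_
  rw [partialDeriv_apply (F := fun q => q j) fun _ => rfl, pd, (hasFDerivAt_apply j p.1).fderiv]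
  change (Pi.single i 1 : Pt) j = _
  rcases eq_or_ne i j with rfl | hij
  · simp
  · simp [hij, hij.symm]

lemma exists_algebraMap_eq_of_partialDeriv_eq_zero {U : Opens Pt} (hU : IsPreconnected (U : Set Pt))
    {f : smoothFunctions U} (hf : ∀ i, partialDeriv i f = 0) :
    ∃ c : ℝ, algebraMap ℝ (smoothFunctions U) c = f := by
  refine smoothFunctions.exists_algebraMap_eq hU fun w => smoothFunctions.ext fun p => ?_
  have hzero : (fderiv ℝ (smoothFunctions.extend f) p : Pt →ₗ[ℝ] ℝ) = 0 :=
    LinearMap.pi_ext' fun i => LinearMap.ext_ring <|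
      congrArg (fun g : smoothFunctions U => g.1 p) (hf i)
  exact LinearMap.congr_fun hzero w

/-- The half space `u > 0`. -/
def halfSpace : Opens Pt := ⟨{p | 0 < p 0}, isOpen_lt continuous_const (continuous_apply 0)⟩

lemma isPreconnected_halfSpace : IsPreconnected (halfSpace : Set Pt) :=
  (convex_halfSpace_gt (LinearMap.proj (R := ℝ) (φ := fun _ : Fin 4 => ℝ) 0).isLinear
    0).isPreconnected

instance : Nonempty halfSpace := ⟨⟨fun _ => 1, one_pos (α := ℝ)⟩⟩

/-- The function `u ^ (-1/4)`. -/
def fourthRootInv : smoothFunctions halfSpace :=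
  smoothFunctions.restrict (fun p => p 0 ^ (-(1 / 4) : ℝ)) <|
    ContDiffOn.rpow_const_of_ne (by fun_prop) fun _ hp => ne_of_gt hp

/-- The smooth functions on the half space `u > 0`, with the coordinates `(u, v, y, z)`. -/
def halfSpaceChart : HalfSpaceChart ℝ (smoothFunctions halfSpace) where
  d := partialDeriv
  x := coordinate
  xInv := fourthRootInv ^ 4
  d_x := partialDeriv_coordinate
  d_comm _ _ := smoothFunctions.dirDeriv_comm _ _
  x_mul_xInv := smoothFunctions.ext fun p => by
    have hp : 0 < p.1 0 := p.2
    change p.1 0 * (p.1 0 ^ (-(1 / 4) : ℝ)) ^ 4 = 1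
    rw [← Real.rpow_natCast, ← Real.rpow_mul hp.le]
    norm_num [Real.rpow_neg_one, hp.ne']
  exists_algebraMap_eq _ := exists_algebraMap_eq_of_partialDeriv_eq_zero isPreconnected_halfSpace

lemma waveProfile_fourthRootInv_apply (p : halfSpace) :
    (halfSpaceChart.waveProfile fourthRootInv).1 p =
      3 / 16 / p.1 0 ^ 2 * (p.1 2 ^ 2 + p.1 3 ^ 2) / 2 := by
  have hp : 0 < p.1 0 := p.2
  change 3 / 32 * ((p.1 0 ^ (-(1 / 4) : ℝ)) ^ 8 * (p.1 2 ^ 2 + p.1 3 ^ 2)) = _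
  rw [← Real.rpow_natCast, ← Real.rpow_mul hp.le,
    show -(1 / 4) * ((8 : ℕ) : ℝ) = -(2 : ℕ) by norm_num, Real.rpow_neg hp.le, Real.rpow_natCast]
  ring

lemma sum_smul_apply {U : Opens Pt} {n : ℕ} (c : Fin n → ℝ)
    (k : Fin n → Fin 4 → Fin 4 → smoothFunctions U) (a b : Fin 4) (p : U) :
    ((∑ i, c i • k i) a b).1 p = ∑ i, c i * smoothFunctions.extend (k i a b) p := by
  simp only [Finset.sum_apply, Pi.smul_apply, AddSubmonoidClass.coe_finsetSum, SetLike.val_smul,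
    smul_eq_mul, smoothFunctions.extend_of_mem _ p.2]

end HalfSpace

/-- For the conformally flat plane wave with `A(u) = (3/16)u⁻²` on
`{u > 0}`, the quotient of the space of Killing tensors by the subspace of reducible
ones has dimension exactly 6: there are six Killing tensors, linearly independent
modulo reducible ones, spanning all Killing tensors modulo reducible ones. -/
theorem stmt8 :
    let U : Set Pt := {p | 0 < p 0}
    let H : Pt → ℝ := fun p => (3 / 16 / (p 0) ^ 2) * ((p 2) ^ 2 + (p 3) ^ 2) / 2
    ∃ B : Fin 6 → Pt → Fin 4 → Fin 4 → ℝ,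
      (∀ i, IsKillingTensor H U (B i)) ∧
      (∀ c : Fin 6 → ℝ,
        IsReducible H U (fun p a b => ∑ i, c i * B i p a b) → c = 0) ∧
      (∀ K, IsKillingTensor H U K →
        ∃ (c : Fin 6 → ℝ) (R : Pt → Fin 4 → Fin 4 → ℝ), IsReducible H U R ∧
          ∀ p ∈ U, ∀ a b, K p a b = (∑ i, c i * B i p a b) + R p a b) := by
  intro U H
  obtain ⟨k, hk⟩ := HalfSpaceChart.exists_isBasisModReducible
    (C := halfSpaceChart) (s := fourthRootInv) rfl
  have hH : ∀ p : halfSpace, (halfSpaceChart.waveProfile fourthRootInv).1 p = H p :=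
    waveProfile_fourthRootInv_apply
  refine ⟨fun i p a b => smoothFunctions.extend (k i a b) p, fun i => ?_, fun c hc => ?_,
    fun K hK => ?_⟩
  · have hki := hk.isKillingTwoTensor i
    exact (isKillingTensor_iff hH
      (fun p a b => congrArg (smoothFunctions.extend · p) (hki.symm a b))
      fun a b p => (smoothFunctions.extend_of_mem (k i a b) p.2).symm).2 hki
  · exact hk.eq_zero_of_sum_smul_mem c ((isReducible_iff hH (sum_smul_apply c k)).1 hc)
  · let κ a b : smoothFunctions halfSpace := smoothFunctions.restrict (fun p => K p a b) (hK.1 a b)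
    have hκ := (isKillingTensor_iff (k := κ) hH hK.2.1 fun _ _ _ => rfl).1 hK
    obtain ⟨c, hc⟩ := hk.exists_sub_sum_smul_mem κ hκ
    let B p a b := ∑ i, c i * smoothFunctions.extend (k i a b) p
    refine ⟨c, fun p a b => K p a b - B p a b, (isReducible_iff hH fun a b p => ?_).2 hc,
      fun p _ a b => (add_sub_cancel (B p a b) _).symm⟩
    exact congrArg (K p a b - ·) (sum_smul_apply c k a b p)

end
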